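/- Let K be an algebraically closed field, R = K[x_0,…,x_r], Z ⊂ ℙ^r a finite reduced set of points with saturated homogeneous ideal I_Z, L a general linear form, and J = (I_Z + (L))/(L) ⊆ S = R/(L) ≅ K[x_1,…,x_r] the artinian reduction, with A = S/J. Fix an integer n and assume that h_A(n) ≥ n+1 and h_A(n+1) = h_A(n)^{⟨n⟩} − 1 (almost maximal growth, i.e. the hypotheses of one of the two base-locus theorems hold). Then the base locus of [I_Z]_n in ℙ^r is a scheme of dimension either MG(h_A(n),n) or MG(h_A(n),n) + 1. -/

import Mathlib

open MvPolynomial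

/-- The Hilbert function of `S/I` in degree `t`: the dimension over `K` of the image of the
space of homogeneous polynomials of degree `t` in the quotient `S/I`. -/
noncomputable def hilb {K : Type*} [Field K] {σ : Type*} (I : Ideal (MvPolynomial σ K)) (t : ℕ) : ℕ :=
  Module.finrank K
    ((homogeneousSubmodule σ K t).map (Ideal.Quotient.mkₐ K I).toLinearMap)

/-- The ideal generated by the degree-`n` component of `I`, i.e. by all homogeneous elements of
`I` of degree `n`.  Its zero locus is the base locus of the linear system `[I]_n`. -/
noncomputable def compIdeal {K : Type*} [Field K] {σ : Type*} (I : Ideal (MvPolynomial σ K)) (n : ℕ) :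
    Ideal (MvPolynomial σ K) :=
  Ideal.span ((I : Set (MvPolynomial σ K)) ∩ (homogeneousSubmodule σ K n : Set (MvPolynomial σ K)))

/-- The first difference of the Hilbert function of `R/I`; for the saturated ideal of a finite
set of points this is the `h`-vector, i.e. the Hilbert function of an artinian reduction by a
general linear form. -/
noncomputable def hvec {K : Type*} [Field K] {σ : Type*} (I : Ideal (MvPolynomial σ K)) : ℕ → ℕ
  | 0 => hilb I 0
  | t + 1 => hilb I (t + 1) - hilb I t

/-- The saturated homogeneous ideal of a (finite) set of points of `ℙ^{m-1}`, the points being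
given by (nonzero) representative vectors: a polynomial lies in this ideal iff it vanishes at
every scalar multiple of every representative, i.e. iff all of its homogeneous components vanish
at the corresponding projective points. -/
noncomputable def pointsIdeal {K : Type*} [Field K] {m : ℕ} (Z : Set (Fin m → K)) :
    Ideal (MvPolynomial (Fin m) K) :=
  ⨅ v ∈ Z, ⨅ c : K, RingHom.ker (eval (c • v))

/-- Macaulay's bound `k^{⟨i⟩}`: if `k = C(k_i,i) + C(k_{i-1},i-1) + ⋯ + C(k_j,j)` is the
`i`-binomial expansion of `k`, then `macaulayUp i k = C(k_i+1,i+1) + ⋯ + C(k_j+1,j+1)`. -/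
def macaulayUp : ℕ → ℕ → ℕ
  | 0, _ => 0
  | i + 1, k =>
    if k = 0 then 0
    else
      Nat.choose (Nat.findGreatest (fun b => Nat.choose b (i + 1) ≤ k) (k + i + 1) + 1) (i + 2) +
        macaulayUp i
          (k - Nat.choose (Nat.findGreatest (fun b => Nat.choose b (i + 1) ≤ k) (k + i + 1)) (i + 1))

/-- The MG-dimension `MG(k,n) = k_n - n`, where `C(k_n,n)` is the leading term of the
`n`-binomial expansion of `k` (so `k_n` is the largest `b` with `C(b,n) ≤ k`). -/
def MGdim (k n : ℕ) : ℕ :=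
  Nat.findGreatest (fun b => Nat.choose b n ≤ k) (k + n) - n

/-!
Cut a space `W` of forms of degree `n` by a general linear form `l`. Green's hyperplane restriction
theorem bounds the codimension of the section and, by induction on the codimension, gives Macaulay's
bound. A general hyperplane properly cuts every component of the cone `W = 0` other than the vertex,
so a chain of irreducible closed subsets ending in the vertex lifts from the section with length
increased by one.

*Lower bound.* If the growth of `W` is (almost) maximal, so is that of its section; one descends to
the case where the section of `W` contains all forms. There multiplication by `l` has no cokernel
and no kernel modulo `W`, hence division by `l` makes the polynomial ring act on the quotient, and a
zero of the kernel of this action is a point of the base locus. The one remaining critical case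
propagates down to lower degrees through the ideals `(W : l ^ i)`.

*Upper bound.* By Green's theorem, a number of linear forms governed by the leading binomial index
generates, together with `W`, all forms of degree `n`, and the coordinate ring of the cone is finite
over the polynomial ring in these forms.

Finally, the `h`-vector counts the section of `I_Z` by a linear form that vanishes at no point of
`Z`. These bounds apply to this section of `[I_Z]_n`, and the cone `[I_Z]_n = 0` has one dimension
more.
-/

section Numerics

/-- The largest `b` with `b.choose n ≤ c` (for `n ≠ 0`), that is, the upper entry of the leading
term of the `n`-binomial expansion of `c`. -/
def leadIndex (n c : ℕ) : ℕ :=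
  Nat.findGreatest (fun b => b.choose n ≤ c) (c + n)

/-- The number `c_{⟨n⟩} = C(k_n - 1, n) + ⋯ + C(k_j - 1, j)` obtained from the `n`-binomial
expansion of `c`; it bounds the Hilbert function of a general hyperplane section. -/
def macaulayDown : ℕ → ℕ → ℕ
  | 0, c => c
  | n + 1, c =>
    if c = 0 then 0
    else (leadIndex (n + 1) c - 1).choose (n + 1) +
      macaulayDown n (c - (leadIndex (n + 1) c).choose (n + 1))

/-- The sum `∑_{i ≤ n} min (i + 1) p`: the Hilbert function in degree `n` of a plane curve of
degree `p`. -/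
def staircaseSum (n p : ℕ) : ℕ :=
  ∑ i ∈ Finset.range (n + 1), min (i + 1) p

lemma lt_choose_add_right {n : ℕ} (hn : 0 < n) (c : ℕ) : c < (c + n).choose n := by
  have h := Nat.choose_le_choose c (show c + 1 ≤ c + n by omega)
  rwa [Nat.choose_succ_self_right, Nat.choose_symm_add, Nat.succ_le_iff] at h

lemma le_leadIndex_iff {n b c : ℕ} (hn : 0 < n) : b ≤ leadIndex n c ↔ b.choose n ≤ c := by
  constructor
  · intro h
    refine (Nat.choose_le_choose n h).trans ?_
    exact Nat.findGreatest_spec (P := fun b => b.choose n ≤ c) (Nat.zero_le _)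
      ((Nat.choose_eq_zero_of_lt hn).trans_le c.zero_le)
  · intro h
    refine Nat.le_findGreatest ?_ h
    by_contra! hb
    exact absurd (Nat.choose_le_choose n hb.le) (by have := lt_choose_add_right hn c; omega)

lemma leadIndex_choose_add {m k c : ℕ} (h : c < k.choose m) :
    leadIndex (m + 1) (k.choose (m + 1) + c) = k := by
  refine le_antisymm (Nat.lt_succ_iff.1 (not_le.1 ?_)) ?_
  · rw [le_leadIndex_iff m.add_one_pos, Nat.choose_succ_succ']
    omega
  · rw [le_leadIndex_iff m.add_one_pos]
    omega

lemma le_MGdim_iff {n c d : ℕ} (hn : 0 < n) (hc : 0 < c) :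
    d ≤ MGdim c n ↔ (n + d).choose n ≤ c := by
  have hle : n ≤ leadIndex n c := (le_leadIndex_iff hn).2 (by rwa [Nat.choose_self])
  rw [← le_leadIndex_iff hn, show MGdim c n = leadIndex n c - n from rfl]
  omega

lemma exists_eq_choose_add (m : ℕ) {c : ℕ} (hc : 0 < c) :
    ∃ k c', m ≤ k ∧ c' < (k + 1).choose m ∧ c = (k + 1).choose (m + 1) + c' := by
  have hle := (le_leadIndex_iff (c := c) m.add_one_pos).1 le_rfl
  have hlt := mt (le_leadIndex_iff (c := c) m.add_one_pos).2 (leadIndex (m + 1) c).lt_irrefl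
  have hm : m + 1 ≤ leadIndex (m + 1) c :=
    (le_leadIndex_iff m.add_one_pos).2 (by rwa [Nat.choose_self])
  obtain ⟨k, hk⟩ := Nat.exists_eq_add_of_lt (Nat.succ_le_iff.1 hm)
  rw [show leadIndex (m + 1) c = m + k + 1 by omega] at hle hlt
  rw [Nat.choose_succ_succ' (m + k + 1)] at hlt
  exact ⟨m + k, c - (m + k + 1).choose (m + 1), by omega, by omega, by omega⟩

@[simp]
lemma macaulayDown_zero_right (n : ℕ) : macaulayDown n 0 = 0 := by
  cases n <;> simp [macaulayDown]

lemma macaulayDown_choose_add_of_lt {m k c : ℕ} (h : c < (k + 1).choose m) :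
    macaulayDown (m + 1) ((k + 1).choose (m + 1) + c) = k.choose (m + 1) + macaulayDown m c := by
  by_cases h0 : (k + 1).choose (m + 1) + c = 0
  · have hk : k.choose (m + 1) ≤ (k + 1).choose (m + 1) := Nat.choose_le_choose _ k.le_succ
    rw [h0, show c = 0 by omega, show k.choose (m + 1) = 0 by omega]
    simp
  · rw [macaulayDown, if_neg h0, leadIndex_choose_add h]
    simp

lemma macaulayDown_choose (m k : ℕ) : macaulayDown m ((k + 1).choose m) = k.choose m := by
  cases m with
  | zero => simp [macaulayDown]
  | succ m =>
    rcases Nat.eq_zero_or_pos ((k + 1).choose m) with h | h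
    · rw [Nat.choose_eq_zero_iff] at h
      simp [Nat.choose_eq_zero_of_lt (show k + 1 < m + 1 by omega),
        Nat.choose_eq_zero_of_lt (show k < m + 1 by omega)]
    · simpa using macaulayDown_choose_add_of_lt h

lemma macaulayDown_choose_add {m k c : ℕ} (h : c ≤ (k + 1).choose m) :
    macaulayDown (m + 1) ((k + 1).choose (m + 1) + c) = k.choose (m + 1) + macaulayDown m c := by
  rcases h.lt_or_eq with h | rfl
  · exact macaulayDown_choose_add_of_lt h
  · rw [add_comm (Nat.choose _ _), ← Nat.choose_succ_succ', macaulayDown_choose,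
      macaulayDown_choose, Nat.choose_succ_succ', add_comm]

lemma macaulayDown_succ_bounds (m c : ℕ) :
    macaulayDown m c ≤ macaulayDown m (c + 1) ∧
      macaulayDown m (c + 1) ≤ macaulayDown m c + 1 := by
  induction m generalizing c with
  | zero => simp [macaulayDown]
  | succ m ih =>
    rcases Nat.eq_zero_or_pos c with rfl | hc
    · have h : macaulayDown (m + 1) 1 = 0 := by simpa using macaulayDown_choose (m + 1) m
      simp [h]
    · obtain ⟨k, c', -, hc', rfl⟩ := exists_eq_choose_add m hc
      rw [macaulayDown_choose_add_of_lt hc', add_assoc,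
        macaulayDown_choose_add (Nat.add_one_le_of_lt hc')]
      have := ih c'
      omega

lemma macaulayDown_mono (m : ℕ) : Monotone (macaulayDown m) :=
  monotone_nat_of_le_succ fun c => (macaulayDown_succ_bounds m c).1

lemma add_macaulayDown_le (m : ℕ) {a b : ℕ} (h : a ≤ b) :
    a + macaulayDown m b ≤ b + macaulayDown m a := by
  induction b, h using Nat.le_induction with
  | base => rfl
  | succ b _ ih =>
    have := (macaulayDown_succ_bounds m b).2
    omega

lemma macaulayDown_lt_choose {m k c : ℕ} (hk : m ≤ k) (h : c < (k + 1).choose m) :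
    macaulayDown m c < k.choose m := by
  induction m generalizing k c with
  | zero => simpa [macaulayDown] using h
  | succ m ih =>
    obtain ⟨k, rfl⟩ := Nat.exists_eq_add_of_lt hk
    rw [Nat.choose_succ_succ'] at h
    have hpos : 0 < (m + k + 1).choose m := Nat.choose_pos (by omega)
    have hlast := ih (k := m + k) (c := (m + k + 1).choose m - 1) (by omega) (by omega)
    have hmono := macaulayDown_mono (m + 1)
      (show c ≤ (m + k + 1).choose (m + 1) + ((m + k + 1).choose m - 1) by omega)
    rw [macaulayDown_choose_add (by omega)] at hmono
    rw [Nat.choose_succ_succ']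
    omega

lemma macaulayDown_lt_self {m c : ℕ} (hc : 0 < c) : macaulayDown (m + 1) c < c := by
  obtain ⟨k, c', hk, hc', rfl⟩ := exists_eq_choose_add m hc
  have hle := add_macaulayDown_le m c'.zero_le
  have hpos : 0 < k.choose m := Nat.choose_pos hk
  rw [macaulayDown_choose_add_of_lt hc', Nat.choose_succ_succ']
  simp only [macaulayDown_zero_right] at hle
  omega

lemma macaulayDown_eq_zero {m c : ℕ} (h : c ≤ m) : macaulayDown m c = 0 := by
  have := macaulayDown_lt_choose (m := m) (k := m) le_rfl (c := c) (by simpa using h)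
  simpa using this

lemma choose_le_macaulayDown {m k c : ℕ} (h : (k + 1).choose m ≤ c) :
    k.choose m ≤ macaulayDown m c := by
  simpa only [macaulayDown_choose] using macaulayDown_mono m h

lemma macaulayDown_sub_add_macaulayDown_le (m : ℕ) {c : ℕ} (hc : 0 < c) :
    macaulayDown m (c - (macaulayDown (m + 1) c + 1)) +
      macaulayDown (m + 1) (macaulayDown (m + 1) c + 1) ≤ macaulayDown (m + 1) c := by
  induction m generalizing c with
  | zero =>
    have h1 : ∀ j, macaulayDown 1 (j + 1) = j := fun j => by simpa using macaulayDown_choose 1 j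
    obtain ⟨j, rfl⟩ := Nat.exists_eq_succ_of_ne_zero hc.ne'
    simp [h1]
  | succ m ih =>
    obtain ⟨k, c', hk, hc', rfl⟩ := exists_eq_choose_add (m + 1) hc
    obtain ⟨k, rfl⟩ : ∃ i, k = i + 1 := ⟨k - 1, by omega⟩
    have hdown := macaulayDown_lt_choose hk hc'
    have hpascal := Nat.choose_succ_succ' (k + 1) (m + 1)
    rw [macaulayDown_choose_add hc'.le, add_assoc _ (macaulayDown (m + 1) c') 1,
      macaulayDown_choose_add hdown,
      show (k + 2).choose (m + 2) + c' - ((k + 1).choose (m + 2) + (macaulayDown (m + 1) c' + 1)) =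
        (k + 1).choose (m + 1) + c' - (macaulayDown (m + 1) c' + 1) by grind]
    have hpascal' := Nat.choose_succ_succ' k (m + 1)
    suffices h : macaulayDown (m + 1)
          ((k + 1).choose (m + 1) + c' - (macaulayDown (m + 1) c' + 1)) +
        macaulayDown (m + 1) (macaulayDown (m + 1) c' + 1) ≤
          k.choose (m + 1) + macaulayDown (m + 1) c' by grind
    rcases Nat.eq_zero_or_pos c' with rfl | hpos
    · have hone := macaulayDown_lt_self (m := m) one_pos
      have hmono := macaulayDown_mono (m + 1) ((k + 1).choose (m + 1)).pred_le
      rw [macaulayDown_choose] at hmono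
      simp only [macaulayDown_zero_right, zero_add, add_zero, Nat.pred_eq_sub_one] at hmono ⊢
      omega
    · have hlt := macaulayDown_lt_self (m := m) hpos
      have hlip := add_macaulayDown_le (m + 1) hc'.le
      rw [macaulayDown_choose] at hlip
      have hpascal'' := Nat.choose_succ_succ' (k + 1) m
      rw [Nat.add_sub_assoc (Nat.add_one_le_of_lt hlt), macaulayDown_choose_add (by grind)]
      have := ih hpos
      omega

lemma le_macaulayDown_of_le_add {m c c₁ : ℕ} (hle : c₁ ≤ c)
    (h : c₁ ≤ macaulayDown m (c - c₁) + macaulayDown (m + 1) c₁) :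
    c₁ ≤ macaulayDown (m + 1) c := by
  by_contra! hlt
  have hlip := add_macaulayDown_le (m + 1) (Nat.add_one_le_of_lt hlt)
  have hmono := macaulayDown_mono m (Nat.sub_le_sub_left (Nat.add_one_le_of_lt hlt) c)
  have := macaulayDown_sub_add_macaulayDown_le m (c := c) (by omega)
  omega

lemma macaulayUp_zero_right (n : ℕ) : macaulayUp n 0 = 0 := by
  cases n <;> simp [macaulayUp]

lemma macaulayUp_choose_add_of_lt {m k c : ℕ} (h : c < k.choose m) :
    macaulayUp (m + 1) (k.choose (m + 1) + c) = (k + 1).choose (m + 2) + macaulayUp m c := by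
  by_cases h0 : k.choose (m + 1) + c = 0
  · have hm : m = k := by
      have h1 := Nat.choose_eq_zero_iff.1 (show k.choose (m + 1) = 0 by omega)
      by_contra hne
      rw [Nat.choose_eq_zero_of_lt (by omega)] at h
      omega
    rw [h0, show c = 0 by omega, hm]
    simp [macaulayUp_zero_right]
  · have hlead : Nat.findGreatest (fun b => b.choose (m + 1) ≤ k.choose (m + 1) + c)
        (k.choose (m + 1) + c + m + 1) = k := leadIndex_choose_add h
    rw [macaulayUp, if_neg h0, hlead]
    simp

lemma macaulayUp_choose (m k : ℕ) :
    macaulayUp (m + 1) (k.choose (m + 1)) = (k + 1).choose (m + 2) := by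
  rcases Nat.eq_zero_or_pos (k.choose m) with h | h
  · rw [Nat.choose_eq_zero_iff] at h
    rw [Nat.choose_eq_zero_of_lt (by omega), Nat.choose_eq_zero_of_lt (by omega),
      macaulayUp_zero_right]
  · simpa [macaulayUp_zero_right] using macaulayUp_choose_add_of_lt h

lemma macaulayUp_choose_add {m k c : ℕ} (h : c ≤ k.choose (m + 1)) :
    macaulayUp (m + 2) (k.choose (m + 2) + c) =
      (k + 1).choose (m + 3) + macaulayUp (m + 1) c := by
  rcases h.lt_or_eq with h | rfl
  · exact macaulayUp_choose_add_of_lt h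
  · rw [add_comm (Nat.choose _ _), ← Nat.choose_succ_succ', macaulayUp_choose, macaulayUp_choose,
      Nat.choose_succ_succ', add_comm]

lemma macaulayUp_eq_self_add (m c : ℕ) :
    macaulayUp (m + 1) c = c + macaulayUp (m + 1) (macaulayDown (m + 1) c) := by
  induction m generalizing c with
  | zero =>
    have hup : ∀ j, macaulayUp 1 j = (j + 1).choose 2 := fun j => by
      simpa using macaulayUp_choose 0 j
    cases c with
    | zero => simp [hup]
    | succ c =>
      have hdown : macaulayDown 1 (c + 1) = c := by simpa using macaulayDown_choose 1 c
      rw [hup, hdown, hup, Nat.choose_succ_succ' (c + 1), Nat.choose_one_right]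
  | succ m ih =>
    rcases Nat.eq_zero_or_pos c with rfl | hc
    · simp [macaulayUp_zero_right]
    · obtain ⟨k, c', -, hc', rfl⟩ := exists_eq_choose_add (m + 1) hc
      have hdown := macaulayDown_mono (m + 1) hc'.le
      rw [macaulayDown_choose] at hdown
      rw [macaulayUp_choose_add_of_lt hc', macaulayDown_choose_add_of_lt hc',
        macaulayUp_choose_add hdown, ih c', Nat.choose_succ_succ' (k + 1) (m + 2)]
      ring

lemma le_macaulayUp (m c : ℕ) : c ≤ macaulayUp (m + 1) c :=
  (Nat.le_add_right _ _).trans_eq (macaulayUp_eq_self_add m c).symm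

lemma macaulayUp_strictMono (m : ℕ) : StrictMono (macaulayUp (m + 1)) := by
  intro a b
  induction b using Nat.strong_induction_on generalizing a with
  | _ b ih =>
    intro hab
    rw [macaulayUp_eq_self_add m a, macaulayUp_eq_self_add m b]
    rcases (macaulayDown_mono (m + 1) hab.le).lt_or_eq with h | h
    · exact add_lt_add hab (ih _ (macaulayDown_lt_self (Nat.zero_lt_of_lt hab)) h)
    · rw [h]
      omega

lemma macaulayUp_eq_self {m c : ℕ} (h : c ≤ m + 1) : macaulayUp (m + 1) c = c := by
  rw [macaulayUp_eq_self_add, macaulayDown_eq_zero h, macaulayUp_zero_right, add_zero]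

lemma staircaseSum_succ_succ (n p : ℕ) :
    staircaseSum (n + 1) (p + 1) = (n + 2) + staircaseSum n p := by
  simp only [staircaseSum, Finset.sum_range_succ' _ (n + 1), Nat.add_min_add_right,
    Finset.sum_add_distrib, Finset.sum_const, Finset.card_range, smul_eq_mul]
  omega

lemma staircaseSum_mono (n : ℕ) : Monotone (staircaseSum n) :=
  fun _ _ h => Finset.sum_le_sum fun _ _ => min_le_min_left _ h

lemma staircaseSum_self (n : ℕ) : staircaseSum n (n + 1) = (n + 2).choose n := by
  induction n with
  | zero => simp [staircaseSum]
  | succ n ih =>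
    rw [staircaseSum_succ_succ, ih, Nat.choose_succ_succ' (n + 2), add_comm,
      Nat.choose_succ_self_right, add_comm]

lemma macaulayDown_staircaseSum {n p : ℕ} (hp : p ≤ n + 1) :
    macaulayDown n (staircaseSum n p) = p := by
  induction n generalizing p with
  | zero => simpa [staircaseSum, macaulayDown] using hp
  | succ n ih =>
    cases p with
    | zero => simp [staircaseSum]
    | succ p =>
      have hle : staircaseSum n p ≤ (n + 2).choose n :=
        (staircaseSum_mono n (by omega)).trans_eq (staircaseSum_self n)
      rw [staircaseSum_succ_succ, ← Nat.choose_succ_self_right (n + 1),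
        macaulayDown_choose_add hle, ih (by omega), Nat.choose_self, add_comm]

end Numerics

section LinearAlgebra

variable {K : Type*} [Field K] {V V' : Type*} [AddCommGroup V] [Module K V]
  [AddCommGroup V'] [Module K V']

lemma finrank_map_add_finrank_inf_ker (f : V →ₗ[K] V') (N : Submodule K V)
    [FiniteDimensional K N] :
    Module.finrank K (N.map f) + Module.finrank K (N ⊓ LinearMap.ker f : Submodule K V) =
      Module.finrank K N := by
  rw [← LinearMap.finrank_range_add_finrank_ker (f.domRestrict N), LinearMap.range_domRestrict,
    LinearMap.ker_domRestrict, ← Submodule.map_comap_subtype, Submodule.finrank_map_subtype_eq]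

lemma finrank_map_mkQ_add_finrank (W N : Submodule K V) [FiniteDimensional K W]
    [FiniteDimensional K N] :
    Module.finrank K (N.map W.mkQ) + Module.finrank K W =
      Module.finrank K (W ⊔ N : Submodule K V) := by
  have h := finrank_map_add_finrank_inf_ker W.mkQ (W ⊔ N)
  rwa [Submodule.ker_mkQ, inf_of_le_right le_sup_left, Submodule.map_sup, Submodule.mkQ_map_self,
    bot_sup_eq] at h

end LinearAlgebra

section Forms

open scoped Pointwise

variable {K : Type*} [Field K] {σ : Type*}

local notation "𝒮" => MvPolynomial σ K
local notation "𝓗" => homogeneousSubmodule σ K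

/-- The codimension in the space of forms of degree `n` of a subspace `W` of that space. -/
noncomputable def homogCodim (n : ℕ) (W : Submodule K 𝒮) : ℕ :=
  Module.finrank K (𝓗 n) - Module.finrank K W

/-- The forms `f` of degree `n` with `l * f ∈ W`, i.e. the degree `n` part of `(W : l)`. -/
noncomputable def homogColon (n : ℕ) (l : 𝒮) (W : Submodule K 𝒮) : Submodule K 𝒮 :=
  𝓗 n ⊓ W.comap (LinearMap.mulLeft K l)

/-- A property of coefficient vectors holds generically if it holds on a nonempty basic Zariski
open subset of affine space. -/
def HoldsGenerically (P : (σ → K) → Prop) : Prop :=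
  ∃ g : 𝒮, g ≠ 0 ∧ ∀ v, eval v g ≠ 0 → P v

lemma mem_homogColon {n : ℕ} {l f : 𝒮} {W : Submodule K 𝒮} :
    f ∈ homogColon n l W ↔ f ∈ 𝓗 n ∧ l * f ∈ W :=
  Iff.rfl

lemma homogColon_le (n : ℕ) (l : 𝒮) (W : Submodule K 𝒮) : homogColon n l W ≤ 𝓗 n :=
  inf_le_left

lemma homogColon_mono {n : ℕ} {l : 𝒮} {W W' : Submodule K 𝒮} (h : W ≤ W') :
    homogColon n l W ≤ homogColon n l W' :=
  inf_le_inf_left _ (Submodule.comap_mono h)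

lemma homogeneousSubmodule_one_mul (n : ℕ) : 𝓗 1 * 𝓗 n = 𝓗 (n + 1) := by
  rw [← homogeneousSubmodule_one_pow K n, ← pow_succ', homogeneousSubmodule_one_pow]

lemma smul_homogeneousSubmodule_le {l : 𝒮} (hl : l ∈ 𝓗 1) (n : ℕ) : l • 𝓗 n ≤ 𝓗 (n + 1) := by
  rw [← homogeneousSubmodule_one_mul, ← Submodule.span_singleton_mul]
  gcongr
  simpa using hl

@[simp]
lemma homogCodim_homogeneousSubmodule (n : ℕ) : homogCodim n (𝓗 n) = 0 :=
  Nat.sub_self _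

section Finite

variable [Finite σ]

instance (n : ℕ) : FiniteDimensional K (𝓗 n) :=
  Module.Finite.iff_fg.2 (homogeneousSubmodule_fg σ K n)

lemma homogCodim_add_finrank {n : ℕ} {W : Submodule K 𝒮} (h : W ≤ 𝓗 n) :
    homogCodim n W + Module.finrank K W = Module.finrank K (𝓗 n) :=
  Nat.sub_add_cancel (Submodule.finrank_mono h)

lemma homogCodim_anti {n : ℕ} {W W' : Submodule K 𝒮} (h : W ≤ W') (h' : W' ≤ 𝓗 n) :
    homogCodim n W' ≤ homogCodim n W :=
  have := Submodule.finiteDimensional_of_le h'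
  Nat.sub_le_sub_left (Submodule.finrank_mono h) _

lemma eq_of_homogCodim_le {n : ℕ} {W W' : Submodule K 𝒮} (h : W ≤ W') (h' : W' ≤ 𝓗 n)
    (hc : homogCodim n W ≤ homogCodim n W') : W = W' := by
  have := Submodule.finiteDimensional_of_le h'
  have h₁ := homogCodim_add_finrank h'
  have h₂ := homogCodim_add_finrank (h.trans h')
  exact Submodule.eq_of_le_of_finrank_le h (by omega)

lemma eq_homogeneousSubmodule_of_homogCodim_eq_zero {n : ℕ} {W : Submodule K 𝒮} (h : W ≤ 𝓗 n)
    (hc : homogCodim n W = 0) : W = 𝓗 n :=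
  eq_of_homogCodim_le h le_rfl (hc.trans_le (Nat.zero_le _))

lemma homogCodim_eq_sup_add_colon {n : ℕ} {l : 𝒮} (hl : l ∈ 𝓗 1) {W : Submodule K 𝒮}
    (hW : W ≤ 𝓗 (n + 1)) :
    homogCodim (n + 1) W =
      homogCodim (n + 1) (W ⊔ l • 𝓗 n) + homogCodim n (homogColon n l W) := by
  have hmul := smul_homogeneousSubmodule_le hl n
  have := Submodule.finiteDimensional_of_le hW
  have := Submodule.finiteDimensional_of_le hmul
  have hrank := finrank_map_add_finrank_inf_ker (W.mkQ ∘ₗ LinearMap.mulLeft K l) (𝓗 n)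
  rw [LinearMap.ker_comp, Submodule.ker_mkQ, Submodule.map_comp] at hrank
  have hsup := finrank_map_mkQ_add_finrank W (l • 𝓗 n)
  have h₁ := homogCodim_add_finrank hW
  have h₂ := homogCodim_add_finrank (sup_le hW hmul)
  have h₃ := homogCodim_add_finrank (homogColon_le n l W)
  change _ + Module.finrank K (homogColon n l W) = _ at hrank
  change Module.finrank K (((𝓗 n).map (LinearMap.mulLeft K l)).map W.mkQ) + _ = _ at hsup
  omega

end Finite

namespace HoldsGenerically

variable {P Q : (σ → K) → Prop}

lemma mono (hP : HoldsGenerically P) (h : ∀ v, P v → Q v) : HoldsGenerically Q := by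
  obtain ⟨g, hg, hgP⟩ := hP
  exact ⟨g, hg, fun v hv => h v (hgP v hv)⟩

lemma and (hP : HoldsGenerically P) (hQ : HoldsGenerically Q) :
    HoldsGenerically fun v => P v ∧ Q v := by
  obtain ⟨g, hg, hgP⟩ := hP
  obtain ⟨g', hg', hgQ⟩ := hQ
  refine ⟨g * g', mul_ne_zero hg hg', fun v hv => ?_⟩
  rw [map_mul] at hv
  exact ⟨hgP v (left_ne_zero_of_mul hv), hgQ v (right_ne_zero_of_mul hv)⟩

lemma forall_mem_finset {ι : Type*} (S : Finset ι) {P : ι → (σ → K) → Prop}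
    (h : ∀ i ∈ S, HoldsGenerically (P i)) : HoldsGenerically fun v => ∀ i ∈ S, P i v := by
  classical
  induction S using Finset.induction_on with
  | empty => exact ⟨1, one_ne_zero, by simp⟩
  | insert a S _ ih =>
    rw [Finset.forall_mem_insert] at h
    exact (h.1.and (ih h.2)).mono fun v hv => (Finset.forall_mem_insert _ _ _).2 hv

lemma exists_of_infinite [Infinite K] (hP : HoldsGenerically P) : ∃ v, P v := by
  obtain ⟨g, hg, hgP⟩ := hP
  by_contra! h
  exact hg (MvPolynomial.funext fun v => not_not.1 fun hv => h v (hgP v (by simpa using hv)))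

end HoldsGenerically

section LinearForm

variable [Finite σ]

/-- The linear form `∑ i, v i * X i` with coefficient vector `v`. -/
noncomputable def linForm : (σ → K) →ₗ[K] 𝒮 :=
  Finsupp.linearCombination K X ∘ₗ (Finsupp.linearEquivFunOnFinite K K σ).symm

lemma eval_linForm [Fintype σ] (a v : σ → K) : eval a (linForm v) = ∑ i, v i * a i := by
  simp [linForm, Finsupp.linearCombination_eq_fintype_linearCombination_apply,
    Fintype.linearCombination_apply, smul_eval]

lemma linForm_single_one [DecidableEq σ] (i : σ) :
    linForm (Pi.single i 1) = (X i : 𝒮) := by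
  simp [linForm]

lemma range_linForm : LinearMap.range (linForm : (σ → K) →ₗ[K] 𝒮) = 𝓗 1 := by
  rw [homogeneousSubmodule_one_eq_span_X, linForm, LinearEquiv.range_comp,
    Finsupp.range_linearCombination]

lemma linForm_mem (v : σ → K) : linForm v ∈ 𝓗 1 :=
  range_linForm (K := K) (σ := σ) ▸ LinearMap.mem_range_self linForm v

namespace HoldsGenerically

lemma det_ne_zero {ι : Type*} [Fintype ι] [DecidableEq ι] (φ : ι → ι → (σ → K) →ₗ[K] K)
    {v₀ : σ → K} (h : (Matrix.of fun i j => φ i j v₀).det ≠ 0) :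
    HoldsGenerically fun v => (Matrix.of fun i j => φ i j v).det ≠ 0 := by
  classical
  cases nonempty_fintype σ
  let M : Matrix ι ι 𝒮 := Matrix.of fun i j => linForm fun k => φ i j (Pi.single k 1)
  have heval : ∀ v, eval v M.det = (Matrix.of fun i j => φ i j v).det := by
    intro v
    rw [RingHom.map_det]
    congr 1
    ext i j
    conv_rhs => rw [pi_eq_sum_univ' v]
    simp [M, eval_linForm, mul_comm]
  refine ⟨M.det, fun hM => h ?_, fun v hv => by rwa [heval] at hv⟩
  rw [← heval, hM, map_zero]

lemma linearMap_ne_zero {φ : (σ → K) →ₗ[K] K} {v₀ : σ → K} (h : φ v₀ ≠ 0) :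
    HoldsGenerically fun v => φ v ≠ 0 := by
  simpa using det_ne_zero (ι := Unit) (fun _ _ => φ) (v₀ := v₀) (by simpa using h)

lemma linForm_notMem {P : Submodule K 𝒮} {v₀ : σ → K} (h : linForm v₀ ∉ P) :
    HoldsGenerically fun v => linForm v ∉ P := by
  obtain ⟨φ, hφ, hP⟩ := Submodule.exists_le_ker_of_notMem h
  exact (linearMap_ne_zero (φ := φ ∘ₗ linForm) hφ).mono fun v hv hmem => hv (hP hmem)

lemma linearIndependent {ι U Q : Type*} [Finite ι] [AddCommGroup U] [Module K U]
    [AddCommGroup Q] [Module K Q] (F : (σ → K) →ₗ[K] U →ₗ[K] Q) (u : ι → U) {v₀ : σ → K}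
    (h : LinearIndependent K fun j => F v₀ (u j)) :
    HoldsGenerically fun v => LinearIndependent K fun j => F v (u j) := by
  classical
  cases nonempty_fintype ι
  obtain ⟨π, hπ⟩ := LinearMap.exists_leftInverse_of_injective
    (Fintype.linearCombination K fun j => F v₀ (u j))
    (LinearMap.ker_eq_bot.2 (linearIndependent_iff_injective_fintypeLinearCombination.1 h))
  have hdual : ∀ j, π (F v₀ (u j)) = Pi.single j 1 := fun j => by
    simpa using LinearMap.congr_fun hπ (Pi.single j 1)
  have hone : (Matrix.of fun i j => π (F v₀ (u j)) i) = (1 : Matrix ι ι K) := by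
    ext i j
    simp [hdual, Matrix.one_apply, Pi.single_apply]
  refine (det_ne_zero (fun i j => LinearMap.proj i ∘ₗ π ∘ₗ F.flip (u j)) (v₀ := v₀) ?_).mono
    fun v hv => LinearIndependent.of_comp π (Matrix.linearIndependent_cols_of_det_ne_zero hv)
  change (Matrix.of fun i j => π (F v₀ (u j)) i).det ≠ 0
  rw [hone, Matrix.det_one]
  exact one_ne_zero

lemma le_finrank_range {U Q : Type*} [AddCommGroup U] [Module K U] [AddCommGroup Q] [Module K Q]
    [FiniteDimensional K U] (F : (σ → K) →ₗ[K] U →ₗ[K] Q) (v₀ : σ → K) :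
    HoldsGenerically fun v =>
      Module.finrank K (LinearMap.range (F v₀)) ≤ Module.finrank K (LinearMap.range (F v)) := by
  let b := Module.finBasis K (LinearMap.range (F v₀))
  choose u hu using fun j => (b j).2
  have hli : LinearIndependent K fun j => F v₀ (u j) := by
    simpa only [hu, Function.comp_def, Submodule.subtype_apply] using
      b.linearIndependent.map' (Submodule.subtype _) (Submodule.ker_subtype _)
  refine (linearIndependent F u hli).mono fun v hv => ?_
  have : LinearIndependent K fun j => (F v).rangeRestrict (u j) := hv.of_comp (Submodule.subtype _)
  simpa using this.fintype_card_le_finrank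

lemma homogCodim_sup_le {m k : ℕ} {W : Submodule K 𝒮} (hW : W ≤ 𝓗 (m + 1)) {v₀ : σ → K}
    (h : homogCodim (m + 1) (W ⊔ linForm v₀ • 𝓗 m) ≤ k) :
    HoldsGenerically fun v : σ → K => homogCodim (m + 1) (W ⊔ linForm v • 𝓗 m) ≤ k := by
  have := Submodule.finiteDimensional_of_le hW
  let F : (σ → K) →ₗ[K] 𝓗 m →ₗ[K] 𝒮 ⧸ W :=
    ((LinearMap.mul K 𝒮).compr₂ W.mkQ).compl₁₂ linForm (𝓗 m).subtype
  have hrange : ∀ v, Module.finrank K (LinearMap.range (F v)) + Module.finrank K W =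
      Module.finrank K (W ⊔ linForm v • 𝓗 m : Submodule K 𝒮) := by
    intro v
    have := Submodule.finiteDimensional_of_le (smul_homogeneousSubmodule_le (linForm_mem v) m)
    have hF : F v = (W.mkQ ∘ₗ LinearMap.mulLeft K (linForm v)) ∘ₗ (𝓗 m).subtype := rfl
    rw [← finrank_map_mkQ_add_finrank, hF, LinearMap.range_comp, Submodule.range_subtype,
      Submodule.map_comp]
    rfl
  refine (le_finrank_range F v₀).mono fun v hv => (Nat.sub_le_sub_left ?_ _).trans h
  rw [← hrange, ← hrange]
  exact Nat.add_le_add_right hv _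

end HoldsGenerically

end LinearForm

/-- The degree `n` part `W + l * 𝓗 (n - 1)` of the preimage, under restriction to the hyperplane
`l = 0`, of the restriction of `W`. -/
noncomputable def hyperplaneSection : ℕ → 𝒮 → Submodule K 𝒮 → Submodule K 𝒮
  | 0, _, W => W
  | n + 1, l, W => W ⊔ l • 𝓗 n

lemma le_hyperplaneSection (n : ℕ) (l : 𝒮) (W : Submodule K 𝒮) : W ≤ hyperplaneSection n l W := by
  cases n
  · exact le_rfl
  · exact le_sup_left

lemma hyperplaneSection_le {n : ℕ} {l : 𝒮} (hl : l ∈ 𝓗 1) {W : Submodule K 𝒮} (hW : W ≤ 𝓗 n) :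
    hyperplaneSection n l W ≤ 𝓗 n := by
  cases n
  · exact hW
  · exact sup_le hW (smul_homogeneousSubmodule_le hl _)

lemma hyperplaneSection_homogColon_le {n : ℕ} {l l' : 𝒮} (hl : l ∈ 𝓗 1) (hl' : l' ∈ 𝓗 1)
    (W : Submodule K 𝒮) :
    hyperplaneSection n l' (homogColon n l W) ≤
      homogColon n l (hyperplaneSection (n + 1) l' W) := by
  have hle := homogColon_mono (n := n) (l := l) (le_hyperplaneSection (n + 1) l' W)
  cases n with
  | zero => exact hle
  | succ n =>
    refine sup_le hle (le_inf (smul_homogeneousSubmodule_le hl' n) ?_)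
    rintro _ ⟨f, hf, rfl⟩
    refine Submodule.mem_sup_right ?_
    change l * (l' * f) ∈ _
    rw [mul_left_comm]
    exact Submodule.smul_mem_pointwise_smul _ l' _
      (smul_homogeneousSubmodule_le hl n (Submodule.smul_mem_pointwise_smul _ l _ hf))

lemma hyperplaneSection_comm (n : ℕ) (l l' : 𝒮) (W : Submodule K 𝒮) :
    hyperplaneSection n l (hyperplaneSection n l' W) =
      hyperplaneSection n l' (hyperplaneSection n l W) := by
  cases n
  · rfl
  · exact sup_right_comm _ _ _

section Green

variable [Finite σ]

lemma eq_homogeneousSubmodule_of_forall_homogCodim_le {m : ℕ} {W : Submodule K 𝒮}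
    (hW : W ≤ 𝓗 (m + 1))
    (h : ∀ v, homogCodim (m + 1) W ≤ homogCodim (m + 1) (hyperplaneSection (m + 1) (linForm v) W)) :
    W = 𝓗 (m + 1) := by
  refine le_antisymm hW ?_
  rw [← homogeneousSubmodule_one_mul, ← range_linForm, Submodule.mul_le]
  rintro _ ⟨v, rfl⟩ f hf
  rw [eq_of_homogCodim_le (le_hyperplaneSection _ _ _) (hyperplaneSection_le (linForm_mem v) hW)
    (h v)]
  exact Submodule.mem_sup_right (Submodule.smul_mem_pointwise_smul _ _ _ hf)

/-- The inductive step of Green's theorem: `l₀` minimises the codimension of the section of `W`, and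
`l` is general with respect to `(W : l₀)` and to the section by `l₀`. -/
lemma homogCodim_hyperplaneSection_le_of_le {m : ℕ} {W : Submodule K 𝒮} (hW : W ≤ 𝓗 (m + 1))
    {l₀ l : 𝒮} (hl₀ : l₀ ∈ 𝓗 1) (hl : l ∈ 𝓗 1)
    (hmin : homogCodim (m + 1) (hyperplaneSection (m + 1) l₀ W) ≤
      homogCodim (m + 1) (hyperplaneSection (m + 1) l W))
    (hcolon : homogCodim m (hyperplaneSection m l (homogColon m l₀ W)) ≤
      macaulayDown m (homogCodim m (homogColon m l₀ W)))
    (hsection : homogCodim (m + 1) (hyperplaneSection (m + 1) l (hyperplaneSection (m + 1) l₀ W)) ≤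
      macaulayDown (m + 1) (homogCodim (m + 1) (hyperplaneSection (m + 1) l₀ W))) :
    homogCodim (m + 1) (hyperplaneSection (m + 1) l₀ W) ≤
      macaulayDown (m + 1) (homogCodim (m + 1) W) := by
  have hWl₀ : _ = homogCodim (m + 1) (hyperplaneSection (m + 1) l₀ W) + _ :=
    homogCodim_eq_sup_add_colon hl₀ hW
  have hWl := hyperplaneSection_le hl hW
  have hWll₀ : _ = homogCodim (m + 1) (hyperplaneSection (m + 1) l₀ _) + _ :=
    homogCodim_eq_sup_add_colon hl₀ hWl
  rw [hyperplaneSection_comm] at hWll₀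
  have hle := homogCodim_anti (hyperplaneSection_homogColon_le (n := m) hl₀ hl W)
    (homogColon_le _ _ _)
  refine le_macaulayDown_of_le_add (by omega) ?_
  rw [hWl₀, Nat.add_sub_cancel_left]
  omega

/-- Green's hyperplane restriction theorem. -/
theorem HoldsGenerically.homogCodim_hyperplaneSection_le [Infinite K] {n : ℕ}
    {W : Submodule K 𝒮} (hW : W ≤ 𝓗 n) :
    HoldsGenerically fun v : σ → K =>
      homogCodim n (hyperplaneSection n (linForm v) W) ≤ macaulayDown n (homogCodim n W) := by
  induction n generalizing W with
  | zero => exact ⟨1, one_ne_zero, fun _ _ => le_rfl⟩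
  | succ m ihm =>
    induction hc : homogCodim (m + 1) W using Nat.strong_induction_on generalizing W with
    | _ c ihc =>
    subst hc
    let codimSection (v : σ → K) := homogCodim (m + 1) (hyperplaneSection (m + 1) (linForm v) W)
    obtain ⟨v₀, hmin⟩ : ∃ v₀, ∀ v, codimSection v₀ ≤ codimSection v :=
      ⟨_, fun v => Function.argmin_le codimSection v⟩
    refine homogCodim_sup_le hW (v₀ := v₀) ?_
    have hsec := hyperplaneSection_le (linForm_mem v₀) hW
    rcases (homogCodim_anti (le_hyperplaneSection _ (linForm v₀) W) hsec).lt_or_eq with hlt | heq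
    · obtain ⟨v, hcolon, hsection⟩ :=
        ((ihm (homogColon_le m (linForm v₀) W)).and (ihc _ hlt hsec rfl)).exists_of_infinite
      exact homogCodim_hyperplaneSection_le_of_le hW (linForm_mem v₀) (linForm_mem v) (hmin v)
        hcolon hsection
    · have htop := eq_homogeneousSubmodule_of_forall_homogCodim_le hW fun v =>
        heq.ge.trans (hmin v)
      refine heq.le.trans ?_
      rw [htop, homogCodim_homogeneousSubmodule]
      exact Nat.zero_le _

end Green

/-- Two subspaces that can occur as the components in degrees `n` and `n + 1` of a homogeneous
ideal. -/
structure IsGradedStep (n : ℕ) (A B : Submodule K 𝒮) : Prop where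
  le_left : A ≤ 𝓗 n
  le_right : B ≤ 𝓗 (n + 1)
  mul_le : 𝓗 1 * A ≤ B

namespace IsGradedStep

variable {n : ℕ} {A B : Submodule K (MvPolynomial σ K)}

lemma of_mul (hA : A ≤ 𝓗 n) : IsGradedStep n A (𝓗 1 * A) where
  le_left := hA
  le_right := (mul_le_mul_right hA _).trans_eq (homogeneousSubmodule_one_mul n)
  mul_le := le_rfl

lemma mul_mem (h : IsGradedStep n A B) {l f : 𝒮} (hl : l ∈ 𝓗 1) (hf : f ∈ A) : l * f ∈ B :=
  h.mul_le (Submodule.mul_mem_mul hl hf)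

lemma le_homogColon (h : IsGradedStep n A B) {l : 𝒮} (hl : l ∈ 𝓗 1) : A ≤ homogColon n l B :=
  fun _ hf => ⟨h.le_left hf, h.mul_mem hl hf⟩

lemma restrict (h : IsGradedStep n A B) {l : 𝒮} (hl : l ∈ 𝓗 1) :
    IsGradedStep n (hyperplaneSection n l A) (hyperplaneSection (n + 1) l B) where
  le_left := hyperplaneSection_le hl h.le_left
  le_right := hyperplaneSection_le hl h.le_right
  mul_le := by
    have hB := h.mul_le.trans (le_hyperplaneSection (n + 1) l B)
    cases n with
    | zero => exact hB
    | succ n =>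
      change 𝓗 1 * (A ⊔ l • 𝓗 n) ≤ _
      rw [Submodule.mul_sup, mul_smul_comm, homogeneousSubmodule_one_mul]
      exact sup_le hB le_sup_right

section Finite

variable [Finite σ]

lemma homogCodim_le_section_add (h : IsGradedStep n A B) {l : 𝒮} (hl : l ∈ 𝓗 1) :
    homogCodim (n + 1) B ≤ homogCodim (n + 1) (hyperplaneSection (n + 1) l B) +
      homogCodim n A :=
  (homogCodim_eq_sup_add_colon hl h.le_right).trans_le
    (Nat.add_le_add_left (homogCodim_anti (h.le_homogColon hl) (homogColon_le n l B)) _)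

lemma homogColon_eq_of_section_add_le (h : IsGradedStep n A B) {l : 𝒮} (hl : l ∈ 𝓗 1)
    (hle : homogCodim (n + 1) (hyperplaneSection (n + 1) l B) + homogCodim n A ≤
      homogCodim (n + 1) B) : homogColon n l B = A := by
  have heq : _ = homogCodim (n + 1) (hyperplaneSection (n + 1) l B) + _ :=
    homogCodim_eq_sup_add_colon hl h.le_right
  exact (eq_of_homogCodim_le (h.le_homogColon hl) (homogColon_le n l B) (by omega)).symm

lemma homogCodim_right_eq_zero (h : IsGradedStep n A B) (hA : homogCodim n A = 0) :
    homogCodim (n + 1) B = 0 := by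
  have hB : 𝓗 (n + 1) ≤ B := by
    rw [← homogeneousSubmodule_one_mul,
      ← eq_homogeneousSubmodule_of_homogCodim_eq_zero h.le_left hA]
    exact h.mul_le
  rw [le_antisymm h.le_right hB, homogCodim_homogeneousSubmodule]

end Finite

/-- Macaulay's theorem on the growth of Hilbert functions. -/
theorem homogCodim_right_le [Finite σ] [Infinite K] {m : ℕ} (h : IsGradedStep (m + 1) A B) :
    homogCodim (m + 2) B ≤ macaulayUp (m + 1) (homogCodim (m + 1) A) := by
  induction hc : homogCodim (m + 1) A using Nat.strong_induction_on generalizing A B with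
  | _ c ih =>
  subst hc
  rcases Nat.eq_zero_or_pos (homogCodim (m + 1) A) with hA | hA
  · exact (h.homogCodim_right_eq_zero hA).trans_le (Nat.zero_le _)
  obtain ⟨v, hgreen⟩ :=
    (HoldsGenerically.homogCodim_hyperplaneSection_le h.le_left).exists_of_infinite
  have hstep := h.restrict (linForm_mem v)
  calc homogCodim (m + 2) B
      ≤ homogCodim (m + 2) (hyperplaneSection (m + 2) (linForm v) B) + homogCodim (m + 1) A :=
        h.homogCodim_le_section_add (linForm_mem v)
    _ ≤ macaulayUp (m + 1) (macaulayDown (m + 1) (homogCodim (m + 1) A)) +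
          homogCodim (m + 1) A := by
        gcongr
        exact (ih _ (hgreen.trans_lt (macaulayDown_lt_self hA)) hstep rfl).trans
          ((macaulayUp_strictMono m).monotone hgreen)
    _ = macaulayUp (m + 1) (homogCodim (m + 1) A) := by
        rw [macaulayUp_eq_self_add m (homogCodim (m + 1) A), add_comm]

end IsGradedStep

section VertexChain

variable (K σ) in
/-- The homogeneous maximal ideal as a point of `Spec K[x]`: the vertex of every affine cone. -/
noncomputable def vertex : PrimeSpectrum 𝒮 where
  asIdeal := RingHom.ker (constantCoeff : 𝒮 →+* K)
  isPrime := RingHom.ker_isPrime _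

/-- The affine cone `W = 0` contains a chain of irreducible closed subsets of length `k` which
ends in the vertex. -/
def HasVertexChain (W : Submodule K 𝒮) (k : ℕ) : Prop :=
  ∃ p : LTSeries (PrimeSpectrum 𝒮),
    (W : Set 𝒮) ⊆ p.head.asIdeal ∧ p.last = vertex K σ ∧ p.length = k

lemma mem_vertex {f : 𝒮} : f ∈ (vertex K σ).asIdeal ↔ constantCoeff f = 0 :=
  Iff.rfl

lemma mem_vertex_of_mem_homogeneousSubmodule {m : ℕ} {f : 𝒮} (hf : f ∈ 𝓗 (m + 1)) :
    f ∈ (vertex K σ).asIdeal :=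
  hf.coeff_eq_zero (by simp)

lemma vertex_le {P : Ideal 𝒮} (h : ∀ i, X i ∈ P) : (vertex K σ).asIdeal ≤ P := by
  intro f hf
  have hf' : f ∈ idealOfVars σ K := by
    rw [← pow_one (idealOfVars σ K), mem_pow_idealOfVars_iff']
    intro d hd
    rw [(Finsupp.degree_eq_zero_iff d).1 (Nat.lt_one_iff.1 hd)]
    exact hf
  exact Ideal.span_le.2 (Set.range_subset_iff.2 h) hf'

lemma eq_vertex {q : PrimeSpectrum 𝒮} (h : ∀ i, X i ∈ q.asIdeal) : q = vertex K σ := by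
  have hmax : (vertex K σ).asIdeal.IsMaximal :=
    RingHom.ker_isMaximal_of_surjective _ fun c => ⟨C c, constantCoeff_C _ c⟩
  exact PrimeSpectrum.ext (hmax.eq_of_le q.isPrime.ne_top (vertex_le h)).symm

lemma aeval_mul_right_of_mem_homogeneousSubmodule {S : Type*} [CommRing S] [Algebra K S]
    (x : σ → S) (t : S) {n : ℕ} {f : 𝒮} (hf : f ∈ 𝓗 n) :
    aeval (fun i => x i * t) f = aeval x f * t ^ n := by
  rw [aeval_def, aeval_def, eval₂_eq, eval₂_eq, Finset.sum_mul]
  refine Finset.sum_congr rfl fun d hd => ?_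
  rw [← hf (mem_support_iff.1 hd), Pi.one_def, ← Finsupp.degree_eq_weight_one,
    Finsupp.degree_apply, mul_assoc, ← Finset.prod_pow_eq_pow_sum, ← Finset.prod_mul_distrib]
  simp only [mul_pow]

/-- The restriction of polynomials to the line through the origin and `a`, parametrized by
`t ↦ t • a`. -/
noncomputable def restrictLine (a : σ → K) : 𝒮 →ₐ[K] Polynomial K :=
  aeval fun i => Polynomial.C (a i) * Polynomial.X

lemma eval_restrictLine (a : σ → K) (c : K) (f : 𝒮) :
    (restrictLine a f).eval c = eval (c • a) f := by
  have hcomp : (Polynomial.evalRingHom c).comp (restrictLine a).toRingHom = eval (c • a) :=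
    ringHom_ext (fun x => by simp) fun i => by simpa [restrictLine] using mul_comm _ _
  exact RingHom.congr_fun hcomp f

namespace HasVertexChain

variable {W W' : Submodule K (MvPolynomial σ K)} {k j m : ℕ}

lemma mono (h : HasVertexChain W k)
    (hW : ∀ q : PrimeSpectrum 𝒮, (W : Set 𝒮) ⊆ q.asIdeal → (W' : Set 𝒮) ⊆ q.asIdeal) :
    HasVertexChain W' k := by
  obtain ⟨p, hWp, hlast, hlen⟩ := h
  exact ⟨p, hW _ hWp, hlast, hlen⟩

lemma anti (h : HasVertexChain W k) (hjk : j ≤ k) : HasVertexChain W j := by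
  obtain ⟨p, hWp, hlast, rfl⟩ := h
  let i : Fin (p.length + 1) := ⟨p.length - j, by omega⟩
  refine ⟨p.drop i, ?_, ?_, ?_⟩
  · rw [RelSeries.head_drop]
    exact hWp.trans (p.monotone (Fin.zero_le i))
  · rw [RelSeries.last_drop, hlast]
  · change p.length - (p.length - j) = j
    omega

lemma natCast_le_ringKrullDim (h : HasVertexChain W k) :
    (k : WithBot ℕ∞) ≤ ringKrullDim (𝒮 ⧸ Ideal.span (W : Set 𝒮)) := by
  obtain ⟨p, hWp, -, rfl⟩ := h
  rw [ringKrullDim_quotient, PrimeSpectrum.zeroLocus_span]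
  let q : LTSeries (PrimeSpectrum.zeroLocus (W : Set 𝒮)) :=
    { length := p.length
      toFun := fun i => ⟨p i, hWp.trans (p.monotone (Fin.zero_le i))⟩
      step := fun i => p.step i }
  exact Order.LTSeries.length_le_krullDim q

lemma sup_span_singleton [Finite σ] (h : HasVertexChain W (k + 1)) {f : 𝒮}
    (hf : f ∈ (vertex K σ).asIdeal) : HasVertexChain (W ⊔ Submodule.span K {f}) k := by
  obtain ⟨p, hWp, hlast, hlen⟩ := h
  rw [← hlast] at hf
  obtain ⟨q, hfq, hlen', hhead, hlast'⟩ := PrimeSpectrum.exist_ltSeries_mem_one_of_mem_last p hf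
  have hWq : W ≤ (q 1).asIdeal.restrictScalars K :=
    (hhead ▸ hWp : (W : Set 𝒮) ⊆ q.head.asIdeal).trans (q.monotone (Fin.zero_le 1))
  refine ⟨q.tail (by omega), ?_, ?_, ?_⟩
  · rw [RelSeries.head_tail]
    exact sup_le hWq ((Submodule.span_singleton_le_iff_mem _ _).2 hfq)
  · rw [RelSeries.last_tail, ← hlast', hlast]
  · change q.length - 1 = k
    omega

lemma of_homogCodim_le_add [Finite σ] (h : HasVertexChain W (k + j)) (hle : W ≤ W')
    (hW' : W' ≤ 𝓗 (m + 1)) (hcodim : homogCodim (m + 1) W ≤ homogCodim (m + 1) W' + j) :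
    HasVertexChain W' k := by
  induction j generalizing W with
  | zero => rwa [← eq_of_homogCodim_le hle hW' hcodim]
  | succ j ih =>
    by_cases hWW' : W' ≤ W
    · rw [← le_antisymm hle hWW']
      exact h.anti (Nat.le_add_right _ _)
    obtain ⟨f, hf, hfW⟩ := SetLike.not_le_iff_exists.1 hWW'
    have hlt : W < W ⊔ Submodule.span K {f} :=
      left_lt_sup.2 fun h => hfW (h (Submodule.mem_span_singleton_self f))
    have hle' : W ⊔ Submodule.span K {f} ≤ W' :=
      sup_le hle ((Submodule.span_singleton_le_iff_mem _ _).2 hf)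
    refine ih (h.sup_span_singleton (mem_vertex_of_mem_homogeneousSubmodule (hW' hf))) hle' ?_
    by_contra! hcon
    exact hlt.ne (eq_of_homogCodim_le hlt.le (hle'.trans hW') (by omega))

protected lemma bot [Finite σ] :
    HasVertexChain (⊥ : Submodule K 𝒮) (Nat.card σ) := by
  classical
  cases nonempty_fintype σ
  let φ (s : Finset σ) : 𝒮 →ₐ[K] 𝒮 := aeval fun i => if i ∈ s then X i else 0
  let P (s : Finset σ) : PrimeSpectrum 𝒮 := ⟨RingHom.ker (φ s), RingHom.ker_isPrime _⟩
  have X_mem_iff (s : Finset σ) (i : σ) : X i ∈ (P s).asIdeal ↔ i ∉ s := by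
    rw [RingHom.mem_ker, aeval_X, ite_eq_right_iff]
    exact forall_congr' fun _ => iff_false_intro (X_ne_zero i)
  have lt_of_ssubset {s t : Finset σ} (hst : s ⊂ t) : P t < P s := by
    have hcomp : (φ s).comp (φ t) = φ s := algHom_ext fun i => by
      by_cases hi : i ∈ t
      · simp [φ, hi]
      · simp [φ, hi, mt (@hst.1 i) hi]
    refine lt_of_le_of_ne (fun f (hf : φ t f = 0) => ?_) fun heq => ?_
    · change φ s f = 0
      rw [← hcomp, AlgHom.comp_apply, hf, map_zero]
    · obtain ⟨i, hit, his⟩ := Finset.exists_of_ssubset hst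
      exact (X_mem_iff t i).1 (heq ▸ (X_mem_iff s i).2 his) hit
  have hchain (s : Finset σ) : ∃ p : LTSeries (PrimeSpectrum 𝒮),
      p.head = P s ∧ p.last = vertex K σ ∧ p.length = s.card := by
    induction s using Finset.induction_on with
    | empty =>
      exact ⟨RelSeries.singleton _ (P ∅), rfl,
        eq_vertex fun i => (X_mem_iff ∅ i).2 (Finset.notMem_empty i), rfl⟩
    | insert i s hi ih =>
      obtain ⟨p, hhead, hlast, hlen⟩ := ih
      refine ⟨p.cons (P (insert i s)) (hhead ▸ lt_of_ssubset (Finset.ssubset_insert hi)),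
        RelSeries.head_cons _ _ _, (RelSeries.last_cons _ _ _).trans hlast, ?_⟩
      rw [RelSeries.cons_length, hlen, Finset.card_insert_of_notMem hi]
  obtain ⟨p, -, hlast, hlen⟩ := hchain Finset.univ
  exact ⟨p, by simp, hlast, hlen.trans Nat.card_eq_fintype_card.symm⟩

lemma of_le_homogeneousSubmodule_one [Finite σ] (hW : W ≤ 𝓗 1) :
    HasVertexChain W (homogCodim 1 W) := by
  have hcard : homogCodim 1 W + Module.finrank K W ≤ Nat.card σ := by
    cases nonempty_fintype σ
    rw [homogCodim_add_finrank hW, ← range_linForm, Nat.card_eq_fintype_card,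
      ← Module.finrank_fintype_fun_eq_card K]
    exact LinearMap.finrank_range_le _
  exact (HasVertexChain.bot.anti hcard).of_homogCodim_le_add bot_le hW
    ((Nat.sub_le _ _).trans (homogCodim_add_finrank hW).ge)

lemma of_eval_eq_zero (hW : W ≤ 𝓗 (m + 1)) {a : σ → K} (ha : a ≠ 0)
    (h : ∀ f ∈ W, eval a f = 0) : HasVertexChain W 1 := by
  let P : PrimeSpectrum 𝒮 := ⟨RingHom.ker (restrictLine a), RingHom.ker_isPrime _⟩
  have hlt : P < vertex K σ := by
    refine lt_of_le_of_ne (fun f (hf : restrictLine a f = 0) => ?_) fun heq => ?_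
    · rw [mem_vertex, ← eval_zero, ← zero_smul K a, ← eval_restrictLine, hf, Polynomial.eval_zero]
    · obtain ⟨i, hi⟩ := Function.ne_iff.1 ha
      have hX : X i ∈ P.asIdeal :=
        heq ▸ mem_vertex_of_mem_homogeneousSubmodule (m := 0) (isHomogeneous_X K i)
      rw [RingHom.mem_ker, restrictLine, aeval_X, mul_eq_zero, Polynomial.C_eq_zero] at hX
      exact hX.elim hi Polynomial.X_ne_zero
  refine ⟨(RelSeries.singleton _ (vertex K σ)).cons P hlt, fun f hf => ?_,
    RelSeries.last_cons _ _ _, rfl⟩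
  change restrictLine a f = 0
  rw [restrictLine, aeval_mul_right_of_mem_homogeneousSubmodule _ _ (hW hf)]
  have hC := aeval_algebraMap_apply (Polynomial K) a f
  change _ = algebraMap K (Polynomial K) (eval a f) at hC
  rw [h f hf, map_zero] at hC
  exact (congrArg (· * _) hC).trans (zero_mul _)

lemma drop [Finite σ] (W : Submodule K 𝒮) (m : ℕ) : HoldsGenerically fun v : σ → K =>
    ∀ k, HasVertexChain (hyperplaneSection (m + 1) (linForm v) W) (k + 1) →
      HasVertexChain W (k + 2) := by
  classical
  let S := (Ideal.finite_minimalPrimes_of_isNoetherianRing 𝒮 (Ideal.span (W : Set 𝒮))).toFinset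
  have hgen : HoldsGenerically fun v : σ → K =>
      ∀ P ∈ S, linForm v ∈ P → (vertex K σ).asIdeal ≤ P := by
    refine HoldsGenerically.forall_mem_finset S fun P _ => ?_
    by_cases hP : ∀ v : σ → K, linForm v ∈ P
    · exact ⟨1, one_ne_zero, fun _ _ _ => vertex_le fun i => linForm_single_one (K := K) i ▸ hP _⟩
    · obtain ⟨v₀, hv₀⟩ := not_forall.1 hP
      exact (HoldsGenerically.linForm_notMem (P := P.restrictScalars K) hv₀).mono
        fun v hv hmem => absurd hmem hv
  refine hgen.mono fun v hv k hk => ?_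
  obtain ⟨q, hWq, hlast, hlen⟩ := hk
  have hlq : linForm v ∈ q.head.asIdeal := by
    refine q.head.isPrime.mem_of_pow_mem (m + 1) (hWq (Submodule.mem_sup_right ?_))
    rw [pow_succ']
    refine Submodule.smul_mem_pointwise_smul _ _ _ ?_
    rw [← homogeneousSubmodule_one_pow]
    exact Submodule.pow_mem_pow _ (linForm_mem v) m
  obtain ⟨P, hP, hPq⟩ := Ideal.exists_minimalPrimes_le (J := q.head.asIdeal)
    (Ideal.span_le.2 fun f hf => hWq (le_hyperplaneSection (m + 1) (linForm v) W hf))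
  have hlt : P < q.head.asIdeal := by
    refine lt_of_le_of_ne hPq fun heq => ?_
    have hhead : (vertex K σ).asIdeal ≤ q.head.asIdeal :=
      (hv P (by simpa [S] using hP) (heq ▸ hlq)).trans heq.le
    have hlt : q.head < q.last := q.strictMono (Fin.lt_def.2 (by simp [hlen]))
    exact (hlast ▸ hlt).not_ge hhead
  refine ⟨q.cons ⟨P, hP.1.1⟩ hlt, ?_, (RelSeries.last_cons _ _ _).trans hlast, ?_⟩
  · rw [RelSeries.head_cons]
    exact Ideal.span_le.1 hP.1.2
  · rw [RelSeries.cons_length, hlen]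

end HasVertexChain

end VertexChain

section CommonZero

lemma homogeneousComponent_mul_of_mem {l : 𝒮} {i : ℕ} (hl : l ∈ 𝓗 i) (f : 𝒮) (j : ℕ) :
    homogeneousComponent (j + i) (l * f) = l * homogeneousComponent j f := by
  let _ : GradedAlgebra 𝓗 := gradedAlgebra
  rw [← decomposition.decompose'_apply, ← decomposition.decompose'_apply, add_comm]
  exact DirectSum.coe_decompose_mul_add_of_left_mem 𝓗 hl

lemma zeroLocus_nonempty [IsAlgClosed K] [Finite σ] {I : Ideal 𝒮} (hI : I ≠ ⊤) :
    (zeroLocus K I).Nonempty := by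
  rw [Set.nonempty_iff_ne_empty]
  intro hempty
  rw [Ne, ← Ideal.radical_eq_top, ← vanishingIdeal_zeroLocus_eq_radical (K := K), hempty,
    vanishingIdeal_empty] at hI
  exact hI rfl

open scoped IsMulCommutative in
lemma exists_algHom_end_of_commute {V : Type*} [AddCommGroup V] [Module K V]
    (φ : σ → Module.End K V) (hcomm : ∀ i j, φ i * φ j = φ j * φ i) :
    ∃ Φ : 𝒮 →ₐ[K] Module.End K V, ∀ i, Φ (X i) = φ i := by
  have : IsMulCommutative (Algebra.adjoin K (Set.range φ)) :=
    Algebra.isMulCommutative_adjoin K (by rintro _ ⟨i, rfl⟩ _ ⟨j, rfl⟩; exact hcomm i j)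
  let Ψ : 𝒮 →ₐ[K] Algebra.adjoin K (Set.range φ) :=
    aeval fun i => ⟨φ i, Algebra.subset_adjoin ⟨i, rfl⟩⟩
  exact ⟨(Algebra.adjoin K (Set.range φ)).val.comp Ψ, fun i => by simp [Ψ]⟩

section DivisionAction

variable {M : Submodule K (MvPolynomial σ K)} {l : MvPolynomial σ K}

lemma exists_division_action (hM : ∀ f, l * f ∈ M → ∀ i, X i * f ∈ M)
    (hdiv : ∀ f, ∃ g, f - l * (l * g) ∈ M) :
    ∃ Φ : 𝒮 →ₐ[K] Module.End K (𝒮 ⧸ M),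
      ∀ p ∈ 𝓗 1, ∀ f, Φ p (M.mkQ (l * f)) = M.mkQ (p * f) := by
  have hdiv' (v : 𝒮 ⧸ M) : ∃ g, v = M.mkQ (l * (l * g)) := by
    obtain ⟨f, rfl⟩ := M.mkQ_surjective v
    obtain ⟨g, hg⟩ := hdiv f
    exact ⟨g, (Submodule.Quotient.eq M).2 hg⟩
  have hsurj : LinearMap.range (M.mkQ ∘ₗ LinearMap.mulLeft K l) = ⊤ :=
    LinearMap.range_eq_top.2 fun v => (hdiv' v).imp' (l * ·) fun _ hg => hg.symm
  obtain ⟨quot, hquot⟩ := LinearMap.exists_rightInverse_of_surjective _ hsurj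
  let φ (i : σ) : Module.End K (𝒮 ⧸ M) := M.mkQ ∘ₗ LinearMap.mulLeft K (X i) ∘ₗ quot
  have hφ (i : σ) (f : 𝒮) : φ i (M.mkQ (l * f)) = M.mkQ (X i * f) := by
    have hlf : M.mkQ (l * quot (M.mkQ (l * f))) = M.mkQ (l * f) := LinearMap.congr_fun hquot _
    refine (Submodule.Quotient.eq M).2 ?_
    rw [LinearMap.comp_apply, LinearMap.mulLeft_apply, ← mul_sub]
    refine hM _ ?_ i
    rw [mul_sub]
    exact (Submodule.Quotient.eq M).1 hlf
  -- Divisibility by `l ^ 2`, rather than just by `l`, is what makes these operators commute.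
  obtain ⟨Φ, hΦ⟩ := exists_algHom_end_of_commute φ fun i j => LinearMap.ext fun v => by
    obtain ⟨g, rfl⟩ := hdiv' v
    rw [Module.End.mul_apply, Module.End.mul_apply, hφ, hφ, mul_left_comm, hφ, mul_left_comm,
      mul_left_comm _ l, hφ]
  refine ⟨Φ, fun p hp f => ?_⟩
  rw [homogeneousSubmodule_one_eq_span_X] at hp
  induction hp using Submodule.span_induction with
  | mem p hp =>
    obtain ⟨i, rfl⟩ := hp
    rw [hΦ, hφ]
  | zero => simp
  | add p q _ _ hp hq => simp only [map_add, add_mul, LinearMap.add_apply, hp, hq]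
  | smul c p _ hp => simp only [map_smul, smul_mul_assoc, LinearMap.smul_apply, hp]

lemma division_action_apply_pow {Φ : 𝒮 →ₐ[K] Module.End K (𝒮 ⧸ M)}
    (hΦ : ∀ p ∈ 𝓗 1, ∀ f, Φ p (M.mkQ (l * f)) = M.mkQ (p * f)) {k : ℕ} {g : 𝒮} (hg : g ∈ 𝓗 k)
    (f : 𝒮) : Φ g (M.mkQ (l ^ k * f)) = M.mkQ (g * f) := by
  induction k generalizing g f with
  | zero =>
    rw [homogeneousSubmodule_zero, Submodule.mem_one] at hg
    obtain ⟨c, rfl⟩ := hg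
    rw [AlgHom.commutes, Module.algebraMap_end_apply, pow_zero, one_mul, ← map_smul,
      Algebra.smul_def]
  | succ k ih =>
    rw [← homogeneousSubmodule_one_mul] at hg
    induction hg using Submodule.mul_induction_on' with
    | mem_mul_mem p hp g hg =>
      rw [map_mul, Module.End.mul_apply, pow_succ, mul_assoc, ih hg, mul_left_comm, hΦ p hp,
        mul_assoc]
    | add p _ q _ hp hq => simp only [map_add, add_mul, LinearMap.add_apply, hp, hq]

lemma exists_eval_eq_one_of_division [IsAlgClosed K] [Finite σ] (hl : l ∈ 𝓗 1)
    (hM : ∀ f, l * f ∈ M → ∀ i, X i * f ∈ M) (hdiv : ∀ f, ∃ g, f - l * (l * g) ∈ M) {n : ℕ}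
    (hn : ∀ f, ∃ g ∈ 𝓗 n, f - g ∈ M) (hM_ne : M ≠ ⊤) :
    ∃ a : σ → K, eval a l = 1 ∧ ∀ f ∈ 𝓗 n, f ∈ M → eval a f = 0 := by
  obtain ⟨Φ, hΦ⟩ := exists_division_action hM hdiv
  have hΦl : Φ l = 1 := LinearMap.ext fun v => by
    obtain ⟨f, rfl⟩ := M.mkQ_surjective v
    obtain ⟨g, hg⟩ := hdiv f
    rw [Submodule.mkQ_apply, (Submodule.Quotient.eq M).2 hg]
    exact hΦ l hl _
  have hΦpow {f : 𝒮} (hf : f ∈ 𝓗 n) : Φ f (M.mkQ (l ^ n)) = M.mkQ f := by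
    simpa only [mul_one] using division_action_apply_pow hΦ hf 1
  have hΦM {f : 𝒮} (hf : f ∈ 𝓗 n) (hfM : f ∈ M) : Φ f = 0 := LinearMap.ext fun v => by
    obtain ⟨p, rfl⟩ := M.mkQ_surjective v
    obtain ⟨g, hg, hpg⟩ := hn p
    rw [Submodule.mkQ_apply, (Submodule.Quotient.eq M).2 hpg, ← Submodule.mkQ_apply, ← hΦpow hg,
      ← Module.End.mul_apply, ← map_mul, mul_comm, map_mul, Module.End.mul_apply, hΦpow hf,
      Submodule.mkQ_apply, (Submodule.Quotient.mk_eq_zero M).2 hfM, map_zero, LinearMap.zero_apply]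
  have hker : RingHom.ker Φ ≠ ⊤ := by
    have : Nontrivial (𝒮 ⧸ M) := Submodule.Quotient.nontrivial_iff.2 hM_ne
    exact RingHom.ker_ne_top _
  obtain ⟨a, ha⟩ := zeroLocus_nonempty hker
  refine ⟨a, ?_, fun f hf hfM => ha f (hΦM hf hfM)⟩
  have hal := ha (l - 1) (by rw [RingHom.mem_ker, map_sub, hΦl, map_one, sub_self])
  rwa [map_sub, map_one, sub_eq_zero] at hal

end DivisionAction

namespace IsGradedStep

variable {m : ℕ} {A B : Submodule K (MvPolynomial σ K)} {l : MvPolynomial σ K}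

lemma exists_mul_mul_sub_mem (h : IsGradedStep (m + 1) A B) (hl : l ∈ 𝓗 1)
    (hsection : hyperplaneSection (m + 1) l A = 𝓗 (m + 1)) {f : 𝒮} (hf : f ∈ 𝓗 (m + 2)) :
    ∃ g ∈ 𝓗 m, f - l * (l * g) ∈ B := by
  have hle := (h.restrict hl).mul_le
  rw [hsection, homogeneousSubmodule_one_mul] at hle
  obtain ⟨b, hb, _, ⟨g', hg', rfl⟩, rfl⟩ := Submodule.mem_sup.1 (hle hf)
  rw [← hsection] at hg'
  obtain ⟨a, ha, _, ⟨g, hg, rfl⟩, rfl⟩ := Submodule.mem_sup.1 hg'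
  refine ⟨g, hg, ?_⟩
  change b + l * (a + l * g) - l * (l * g) ∈ B
  rw [mul_add, ← add_assoc, add_sub_cancel_right]
  exact B.add_mem hb (h.mul_mem hl ha)

theorem exists_common_zero [IsAlgClosed K] [Finite σ] (h : IsGradedStep (m + 1) A B)
    (hl : l ∈ 𝓗 1) (hsection : hyperplaneSection (m + 1) l A = 𝓗 (m + 1))
    (hcolon : homogColon (m + 1) l B = A) (hA : A ≠ 𝓗 (m + 1)) :
    ∃ a : σ → K, a ≠ 0 ∧ (∀ f ∈ A, eval a f = 0) ∧ ∀ f ∈ B, eval a f = 0 := by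
  let M : Submodule K 𝒮 := B.comap (homogeneousComponent (m + 2))
  have mem_M {f : 𝒮} (hf : f ∈ 𝓗 (m + 2)) : f ∈ M ↔ f ∈ B := by
    rw [Submodule.mem_comap, homogeneousComponent_eq_self hf]
  have hl_mul {i : ℕ} {f : 𝒮} (hf : f ∈ 𝓗 i) : l * f ∈ 𝓗 (i + 1) :=
    smul_homogeneousSubmodule_le hl i (Submodule.smul_mem_pointwise_smul f l _ hf)
  have sub_mem_M (f : 𝒮) : f - homogeneousComponent (m + 2) f ∈ M := by
    rw [Submodule.mem_comap, map_sub, homogeneousComponent_eq_self (homogeneousComponent_mem _ f),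
      sub_self]
    exact B.zero_mem
  have hM (f : 𝒮) (hf : l * f ∈ M) (i : σ) : X i * f ∈ M := by
    rw [Submodule.mem_comap, homogeneousComponent_mul_of_mem hl] at hf
    rw [Submodule.mem_comap, homogeneousComponent_mul_of_mem (isHomogeneous_X K i)]
    refine h.mul_mem (isHomogeneous_X K i) ?_
    rw [← hcolon]
    exact ⟨homogeneousComponent_mem _ f, hf⟩
  have hdiv (f : 𝒮) : ∃ g, f - l * (l * g) ∈ M := by
    obtain ⟨g, hg, hmem⟩ :=
      h.exists_mul_mul_sub_mem hl hsection (homogeneousComponent_mem (m + 2) f)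
    refine ⟨g, ?_⟩
    rw [← sub_add_sub_cancel f (homogeneousComponent (m + 2) f)]
    refine M.add_mem (sub_mem_M f) ((mem_M (sub_mem (homogeneousComponent_mem _ f) ?_)).2 hmem)
    exact hl_mul (hl_mul hg)
  have hM_ne : M ≠ ⊤ := fun htop => hA <| by
    refine le_antisymm h.le_left fun f hf => ?_
    rw [← hcolon]
    exact ⟨hf, (mem_M (hl_mul hf)).1 (htop ▸ Submodule.mem_top)⟩
  obtain ⟨a, hal, haB⟩ := exists_eval_eq_one_of_division hl hM hdiv
    (fun f => ⟨_, homogeneousComponent_mem _ f, sub_mem_M f⟩) hM_ne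
  have haB' (f : 𝒮) (hf : f ∈ B) : eval a f = 0 :=
    haB f (h.le_right hf) ((mem_M (h.le_right hf)).2 hf)
  refine ⟨a, ?_, fun f hf => ?_, haB'⟩
  · rintro rfl
    have hl₀ : constantCoeff l = 0 := mem_vertex_of_mem_homogeneousSubmodule hl
    rw [← eval_zero, hal] at hl₀
    exact one_ne_zero hl₀
  · simpa only [map_mul, hal, one_mul] using haB' _ (h.mul_mem hl hf)

end IsGradedStep

end CommonZero

lemma exists_hyperplaneSection [Infinite K] [Finite σ] {m : ℕ} {W : Submodule K 𝒮}
    (hW : W ≤ 𝓗 (m + 1)) :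
    ∃ l ∈ 𝓗 1,
      homogCodim (m + 1) (hyperplaneSection (m + 1) l W) ≤
        macaulayDown (m + 1) (homogCodim (m + 1) W) ∧
      ∀ k, HasVertexChain (hyperplaneSection (m + 1) l W) (k + 1) → HasVertexChain W (k + 2) := by
  obtain ⟨v, hgreen, hdrop⟩ :=
    ((HoldsGenerically.homogCodim_hyperplaneSection_le hW).and
      (HasVertexChain.drop W m)).exists_of_infinite
  exact ⟨linForm v, linForm_mem v, hgreen, hdrop⟩

namespace IsGradedStep

variable {m d : ℕ} {A B : Submodule K (MvPolynomial σ K)} {l : MvPolynomial σ K}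

lemma macaulayUp_macaulayDown_le_section_add [Finite σ] (h : IsGradedStep (m + 1) A B)
    (hl : l ∈ 𝓗 1) {j : ℕ}
    (hgrowth : macaulayUp (m + 1) (homogCodim (m + 1) A) ≤ homogCodim (m + 2) B + j) :
    macaulayUp (m + 1) (macaulayDown (m + 1) (homogCodim (m + 1) A)) ≤
      homogCodim (m + 2) (hyperplaneSection (m + 2) l B) + j := by
  have hB := h.homogCodim_le_section_add hl
  have hup := macaulayUp_eq_self_add m (homogCodim (m + 1) A)
  change homogCodim (m + 2) B ≤ homogCodim (m + 2) (hyperplaneSection (m + 2) l B) + _ at hB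
  omega

lemma exists_common_zero_of_section_eq_zero [IsAlgClosed K] [Finite σ]
    (h : IsGradedStep (m + 1) A B) (hl : l ∈ 𝓗 1)
    (hsection : homogCodim (m + 1) (hyperplaneSection (m + 1) l A) = 0)
    (hA : 0 < homogCodim (m + 1) A) (hle : homogCodim (m + 1) A ≤ homogCodim (m + 2) B) :
    ∃ a : σ → K, a ≠ 0 ∧ (∀ f ∈ A, eval a f = 0) ∧ ∀ f ∈ B, eval a f = 0 := by
  have hstep := h.restrict hl
  refine h.exists_common_zero hl
    (eq_homogeneousSubmodule_of_homogCodim_eq_zero hstep.le_left hsection)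
    (h.homogColon_eq_of_section_add_le hl ?_) ?_
  · rwa [hstep.homogCodim_right_eq_zero hsection, zero_add]
  · rintro rfl
    exact hA.ne' (homogCodim_homogeneousSubmodule _)

variable [IsAlgClosed K] [Finite σ]

lemma hasVertexChain_one_of_maximalGrowth (h : IsGradedStep (m + 1) A B)
    (hA : 0 < homogCodim (m + 1) A)
    (hgrowth : macaulayUp (m + 1) (homogCodim (m + 1) A) ≤ homogCodim (m + 2) B) :
    HasVertexChain A 1 := by
  have := IsAlgClosed.instInfinite (K := K)
  induction hc : homogCodim (m + 1) A using Nat.strong_induction_on generalizing A B with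
  | _ c ih =>
  subst hc
  obtain ⟨l, hl, hgreen, hdrop⟩ := exists_hyperplaneSection h.le_left
  have hstep := h.restrict hl
  have hsecgrowth := h.macaulayUp_macaulayDown_le_section_add hl (j := 0) hgrowth
  rcases Nat.eq_zero_or_pos (homogCodim (m + 1) (hyperplaneSection (m + 1) l A)) with hz | hpos
  · have hle : homogCodim (m + 1) A ≤ homogCodim (m + 2) B :=
      (le_macaulayUp m _).trans hgrowth
    obtain ⟨a, ha, hzero, -⟩ := h.exists_common_zero_of_section_eq_zero hl hz hA hle
    exact .of_eval_eq_zero h.le_left ha hzero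
  · refine (hdrop 0 (ih _ (hgreen.trans_lt (macaulayDown_lt_self hA)) hstep hpos ?_ rfl)).anti
      one_le_two
    exact ((macaulayUp_strictMono m).monotone hgreen).trans hsecgrowth

theorem hasVertexChain_of_maximalGrowth (h : IsGradedStep (m + 1) A B)
    (hA : (m + 1 + d).choose (m + 1) ≤ homogCodim (m + 1) A)
    (hgrowth : macaulayUp (m + 1) (homogCodim (m + 1) A) ≤ homogCodim (m + 2) B) :
    HasVertexChain A (d + 1) := by
  have := IsAlgClosed.instInfinite (K := K)
  induction d generalizing A B with
  | zero =>
    exact h.hasVertexChain_one_of_maximalGrowth ((Nat.choose_pos (by omega)).trans_le hA) hgrowth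
  | succ d ih =>
    obtain ⟨l, hl, hgreen, hdrop⟩ := exists_hyperplaneSection h.le_left
    have hstep := h.restrict hl
    have hsecgrowth := h.macaulayUp_macaulayDown_le_section_add hl (j := 0) hgrowth
    have heq := hgreen.antisymm
      ((macaulayUp_strictMono m).le_iff_le.1 (hsecgrowth.trans hstep.homogCodim_right_le))
    refine hdrop d (ih hstep ?_ (heq ▸ hsecgrowth))
    rw [heq]
    exact choose_le_macaulayDown hA

end IsGradedStep

/-- `Y 0, …, Y n` are the components of degree at most `n` of a homogeneous ideal modulo which
multiplication by the linear form `l` is injective in degrees less than `n`. -/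
structure IsRegularTruncation (l : 𝒮) (n : ℕ) (Y : ℕ → Submodule K 𝒮) : Prop where
  linear : l ∈ 𝓗 1
  step : ∀ i < n, IsGradedStep i (Y i) (Y (i + 1))
  colon : ∀ i < n, homogColon i l (Y (i + 1)) = Y i

lemma IsGradedStep.exists_isRegularTruncation {n : ℕ} {A B : Submodule K 𝒮} {l : 𝒮}
    (h : IsGradedStep n A B) (hl : l ∈ 𝓗 1) (hcolon : homogColon n l B = A) :
    ∃ Y, IsRegularTruncation l n Y ∧ Y n = A := by
  have mul_mem {i j : ℕ} {p f : 𝒮} (hp : p ∈ 𝓗 i) (hf : f ∈ 𝓗 j) : p * f ∈ 𝓗 (i + j) :=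
    IsHomogeneous.mul hp hf
  refine ⟨fun i => homogColon i (l ^ (n - i)) A, ⟨hl, fun i hi => ?_, fun i hi => ?_⟩, ?_⟩
  · refine ⟨homogColon_le _ _ _, homogColon_le _ _ _, Submodule.mul_le.2 fun p hp f hf => ?_⟩
    have hpf : p * f ∈ 𝓗 (i + 1) := add_comm 1 i ▸ mul_mem hp hf.1
    refine ⟨hpf, hcolon ▸ ⟨?_, ?_⟩⟩
    · have hmem := mul_mem (IsHomogeneous.pow hl (n - (i + 1))) hpf
      rwa [one_mul, Nat.sub_add_cancel hi] at hmem
    · have hmem := h.mul_mem hp hf.2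
      rw [LinearMap.mulLeft_apply, show n - i = n - (i + 1) + 1 by omega, pow_succ] at hmem
      change l * (l ^ (n - (i + 1)) * (p * f)) ∈ B
      convert hmem using 1
      ring
  · ext f
    have hpow : l ^ (n - (i + 1)) * (l * f) = l ^ (n - i) * f := by
      rw [← mul_assoc, ← pow_succ, show n - (i + 1) + 1 = n - i by omega]
    simp only [mem_homogColon, hpow]
    exact ⟨fun hf => ⟨hf.1, hf.2.2⟩, fun hf => ⟨hf.1, add_comm 1 i ▸ mul_mem hl hf.1, hf.2⟩⟩
  · ext f
    simp only [mem_homogColon, Nat.sub_self, pow_zero, one_mul, and_iff_right_iff_imp]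
    exact fun hf => h.le_left hf

namespace IsRegularTruncation

variable {l : MvPolynomial σ K} {n m p : ℕ} {Y : ℕ → Submodule K (MvPolynomial σ K)}

lemma homogCodim_eq_sum [Finite σ] (h : IsRegularTruncation l n Y) {i : ℕ} (hi : i ≤ n) :
    homogCodim i (Y i) =
      ∑ j ∈ Finset.range (i + 1), homogCodim j (hyperplaneSection j l (Y j)) := by
  induction i with
  | zero => rw [zero_add, Finset.sum_range_one]; rfl
  | succ i ih =>
    rw [Finset.sum_range_succ, ← ih (by omega), ← h.colon i hi, add_comm (homogCodim _ _)]
    exact homogCodim_eq_sup_add_colon h.linear (h.step i hi).le_right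

lemma homogCodim_section_le_of_le [Finite σ] [Infinite K] (h : IsRegularTruncation l n Y)
    {i j : ℕ} (hij : i ≤ j) (hj : j ≤ n)
    (hsmall : homogCodim i (hyperplaneSection i l (Y i)) ≤ i) :
    homogCodim j (hyperplaneSection j l (Y j)) ≤ homogCodim i (hyperplaneSection i l (Y i)) := by
  induction j, hij using Nat.le_induction with
  | base => exact le_rfl
  | succ j hij ih =>
    have hle := ih (by omega)
    have hstep := (h.step j (by omega)).restrict h.linear
    refine le_trans ?_ hle
    cases j with
    | zero => exact (hstep.homogCodim_right_eq_zero (by omega)).trans_le (Nat.zero_le _)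
    | succ j =>
      exact hstep.homogCodim_right_le.trans_eq (macaulayUp_eq_self (hle.trans (by omega)))

/-- From a degree `i` where the Hilbert function of the hyperplane section is at most
`min i p` it cannot grow, so if it ends at `p` it has stabilised to `p`. -/
lemma exists_common_zero [Finite σ] [IsAlgClosed K] (h : IsRegularTruncation l (m + 1) Y)
    (htop : homogCodim (m + 1) (hyperplaneSection (m + 1) l (Y (m + 1))) = p) (hp : 0 < p)
    {i : ℕ} (him : i ≤ m) (hi : homogCodim i (hyperplaneSection i l (Y i)) ≤ i)
    (hip : homogCodim i (hyperplaneSection i l (Y i)) ≤ p) :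
    ∃ a : σ → K, a ≠ 0 ∧ ∀ f ∈ Y (m + 1), eval a f = 0 := by
  have := IsAlgClosed.instInfinite (K := K)
  have hm := h.homogCodim_section_le_of_le him (by omega) hi
  have htop_le := h.homogCodim_section_le_of_le (Nat.le_add_right m 1) le_rfl
    (hm.trans (hi.trans him))
  obtain ⟨k, rfl⟩ : ∃ k, m = k + 1 := Nat.exists_eq_add_one.2 (by omega)
  have hstep := (h.step (k + 1) (by omega)).restrict h.linear
  obtain ⟨l', hl', hgreen, -⟩ := exists_hyperplaneSection hstep.le_left
  rw [macaulayDown_eq_zero (by omega), Nat.le_zero] at hgreen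
  obtain ⟨a, ha, -, hzero⟩ := hstep.exists_common_zero_of_section_eq_zero hl' hgreen (by omega)
    (hm.trans (hip.trans_eq htop.symm))
  exact ⟨a, ha, fun f hf => hzero f (le_hyperplaneSection _ _ _ hf)⟩

end IsRegularTruncation

lemma IsGradedStep.hasVertexChain_one_right [IsAlgClosed K] [Finite σ] {m : ℕ}
    {A B : Submodule K 𝒮} (h : IsGradedStep (m + 1) A B) (hA : m + 2 ≤ homogCodim (m + 1) A)
    (hgrowth : macaulayUp (m + 1) (homogCodim (m + 1) A) ≤ homogCodim (m + 2) B + 1)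
    (hchain : HasVertexChain A 1) : HasVertexChain B 1 := by
  have hmul := IsGradedStep.of_mul h.le_left
  have hmono {k : ℕ} (hk : HasVertexChain A k) : HasVertexChain (𝓗 1 * A) k :=
    hk.mono fun q hq => Submodule.mul_le (P := q.asIdeal.restrictScalars K) |>.2 fun _ _ _ hf =>
      q.asIdeal.mul_mem_left _ (hq hf)
  by_cases hle : homogCodim (m + 2) (𝓗 1 * A) ≤ homogCodim (m + 2) B
  · rw [← eq_of_homogCodim_le h.mul_le h.le_right hle]
    exact hmono hchain
  · have hmax := hmul.hasVertexChain_of_maximalGrowth (d := 1)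
      (by rwa [Nat.choose_succ_self_right]) (by omega)
    exact (hmono hmax).of_homogCodim_le_add h.mul_le h.le_right
      (hmul.homogCodim_right_le (K := K) |>.trans hgrowth)

lemma homogCodim_homogeneousSubmodule_mul_le [Infinite K] [Finite σ] {W : Submodule K 𝒮} {c : ℕ}
    (hW : W ≤ 𝓗 1) (hc : homogCodim 1 W ≤ c + 1) (m : ℕ) :
    homogCodim (m + 1) (𝓗 m * W) ≤ (m + 1 + c).choose (m + 1) := by
  induction m with
  | zero =>
    rw [homogeneousSubmodule_zero, one_mul, Nat.choose_one_right]
    exact hc.trans_eq (add_comm c 1)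
  | succ m ih =>
    have hle : 𝓗 m * W ≤ 𝓗 (m + 1) :=
      (mul_le_mul_right hW _).trans (homogeneousSubmodule_mul m 1)
    rw [← homogeneousSubmodule_one_mul, mul_assoc, show m + 1 + 1 + c = m + 1 + c + 1 by omega,
      ← macaulayUp_choose]
    exact (IsGradedStep.of_mul hle).homogCodim_right_le.trans
      ((macaulayUp_strictMono m).monotone ih)

lemma HasVertexChain.of_mul_le [Infinite K] [Finite σ] {m c j k : ℕ} {W A : Submodule K 𝒮}
    (hW : W ≤ 𝓗 1) (hc : homogCodim 1 W = c + 1) (hle : 𝓗 m * W ≤ A) (hA : A ≤ 𝓗 (m + 1))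
    (hcodim : (m + 1 + c).choose (m + 1) ≤ homogCodim (m + 1) A + j) (hk : k + j = c + 1) :
    HasVertexChain A k := by
  have hchain : HasVertexChain (𝓗 m * W) (k + j) := by
    rw [hk, ← hc]
    exact (HasVertexChain.of_le_homogeneousSubmodule_one hW).mono fun q hq =>
      Submodule.mul_le (P := q.asIdeal.restrictScalars K) |>.2 fun _ _ _ hf =>
        q.asIdeal.mul_mem_left _ (hq hf)
  exact hchain.of_homogCodim_le_add hle hA
    ((homogCodim_homogeneousSubmodule_mul_le hW hc.le m).trans hcodim)

namespace IsRegularTruncation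

variable {l : MvPolynomial σ K} {n m p : ℕ} {Y : ℕ → Submodule K (MvPolynomial σ K)}

lemma homogeneousSubmodule_mul_le (h : IsRegularTruncation l n Y) {i : ℕ} (hi : i < n) :
    𝓗 i * Y 1 ≤ Y (i + 1) := by
  induction i with
  | zero => rw [homogeneousSubmodule_zero, one_mul]
  | succ i ih =>
    rw [← homogeneousSubmodule_one_mul, mul_assoc]
    exact (mul_le_mul_right (ih (by omega)) _).trans (h.step (i + 1) hi).mul_le

lemma homogCodim_eq_staircaseSum [Finite σ] (h : IsRegularTruncation l (m + 1) Y)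
    (htop : homogCodim (m + 1) (hyperplaneSection (m + 1) l (Y (m + 1))) = p)
    (hdown : macaulayDown (m + 1) (homogCodim (m + 1) (Y (m + 1))) = p) (hp : p ≤ m + 1)
    (hmin : ∀ i ≤ m, min (i + 1) (p + 1) ≤ homogCodim i (hyperplaneSection i l (Y i)))
    {i : ℕ} (hi : i ≤ m) : homogCodim i (Y i) = staircaseSum i (p + 1) := by
  have hmin' : ∀ i ∈ Finset.range (m + 1),
      min (i + 1) (p + 1) ≤ homogCodim i (hyperplaneSection i l (Y i)) :=
    fun i hi => hmin i (Nat.lt_succ_iff.1 (Finset.mem_range.1 hi))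
  have hlt : homogCodim (m + 1) (Y (m + 1)) < staircaseSum (m + 1) (p + 1) := by
    by_contra! hge
    have := macaulayDown_mono (m + 1) hge
    rw [macaulayDown_staircaseSum (by omega)] at this
    omega
  rw [h.homogCodim_eq_sum le_rfl, staircaseSum, Finset.sum_range_succ, htop,
    Finset.sum_range_succ _ (m + 1), min_eq_right (by omega : p + 1 ≤ m + 1 + 1)] at hlt
  have hsum := (Finset.sum_le_sum hmin').antisymm (by omega)
  rw [h.homogCodim_eq_sum (by omega)]
  exact Finset.sum_congr rfl fun j hj =>
    ((Finset.sum_eq_sum_iff_of_le hmin').1 hsum j (Finset.mem_range.2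
      ((Finset.mem_range.1 hj).trans_le (by omega)))).symm

lemma hasVertexChain_one_of_le [IsAlgClosed K] [Finite σ] (h : IsRegularTruncation l (m + 1) Y)
    (hstair : ∀ i ≤ m, homogCodim i (Y i) = staircaseSum i (p + 1))
    (htotal : homogCodim (m + 1) (Y (m + 1)) = staircaseSum m (p + 1) + p) (hp : 0 < p)
    (hmp : m ≤ p) : HasVertexChain (Y (m + 1)) 1 := by
  have := IsAlgClosed.instInfinite (K := K)
  have htop := (h.step m (Nat.lt_succ_self m)).le_right
  have hfull : staircaseSum m (p + 1) = (m + 2).choose m := by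
    rw [← staircaseSum_self]
    exact Finset.sum_congr rfl fun i hi => by grind
  rw [hfull] at htotal
  cases m with
  | zero =>
    rw [Nat.choose_zero_right] at htotal
    have hchain := HasVertexChain.of_le_homogeneousSubmodule_one htop
    exact hchain.anti (by rw [htotal]; omega)
  | succ k =>
    have hthree : homogCodim 1 (Y 1) = 2 + 1 := by
      rw [hstair 1 (by omega), staircaseSum, Finset.sum_range_succ, Finset.sum_range_one]
      omega
    refine .of_mul_le (j := 2) (h.step 0 (by omega)).le_right hthree
      (h.homogeneousSubmodule_mul_le (by omega)) htop ?_ rfl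
    have hpascal := Nat.choose_succ_succ' (k + 1 + 2) (k + 1)
    have hline : (k + 1 + 2).choose (k + 1 + 1) = k + 1 + 2 := Nat.choose_succ_self_right _
    rw [show k + 1 + 1 + 2 = k + 1 + 2 + 1 by omega, hpascal, hline]
    omega

end IsRegularTruncation

namespace IsGradedStep

variable {m p d : ℕ} {A B : Submodule K (MvPolynomial σ K)} {l : MvPolynomial σ K}

/-- If the codimension of a section in some degree `i ≤ m` is less than `min (i + 1) (p + 1)`, the
sections stabilise and there is a common zero. Otherwise they all equal this minimum, so either the
growth from degree `m` to degree `m + 1` is again almost maximal, or `p ≥ m` and `A` is nearly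
generated by linear forms. -/
lemma hasVertexChain_one_of_critical [IsAlgClosed K] [Finite σ] (h : IsGradedStep (m + 1) A B)
    (hl : l ∈ 𝓗 1) (hcolon : homogColon (m + 1) l B = A)
    (htop : homogCodim (m + 1) (hyperplaneSection (m + 1) l A) = p)
    (hdown : macaulayDown (m + 1) (homogCodim (m + 1) A) = p) (hp : 0 < p) (hpm : p ≤ m + 1)
    (ih : ∀ k < m, ∀ {A' B' : Submodule K 𝒮}, IsGradedStep (k + 1) A' B' →
      k + 2 ≤ homogCodim (k + 1) A' →
      macaulayUp (k + 1) (homogCodim (k + 1) A') ≤ homogCodim (k + 2) B' + 1 →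
      HasVertexChain A' 1) :
    HasVertexChain A 1 := by
  have := IsAlgClosed.instInfinite (K := K)
  obtain ⟨Y, hY, rfl⟩ := h.exists_isRegularTruncation hl hcolon
  by_cases hmin : ∀ i ≤ m, min (i + 1) (p + 1) ≤ homogCodim i (hyperplaneSection i l (Y i))
  swap
  · push Not at hmin
    obtain ⟨i, him, hi⟩ := hmin
    obtain ⟨a, ha, hzero⟩ := hY.exists_common_zero htop hp him (by omega) (by omega)
    exact .of_eval_eq_zero h.le_left ha hzero
  have hstair {i : ℕ} (hi : i ≤ m) : homogCodim i (Y i) = staircaseSum i (p + 1) :=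
    hY.homogCodim_eq_staircaseSum htop hdown hpm hmin hi
  have htotal : homogCodim (m + 1) (Y (m + 1)) = staircaseSum m (p + 1) + p := by
    rw [hY.homogCodim_eq_sum le_rfl, Finset.sum_range_succ, htop, ← hstair le_rfl,
      hY.homogCodim_eq_sum (Nat.le_succ m)]
  rcases Nat.lt_or_ge p m with hlt | hge
  · obtain ⟨k, rfl⟩ : ∃ k, m = k + 1 := Nat.exists_eq_add_one.2 (by omega)
    have hstep := hY.step (k + 1) (by omega)
    have hdown' : macaulayDown (k + 1) (homogCodim (k + 1) (Y (k + 1))) = p + 1 := by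
      rw [hstair le_rfl, macaulayDown_staircaseSum (by omega)]
    have hlow : k + 2 ≤ homogCodim (k + 1) (Y (k + 1)) := by
      by_contra! hsmall
      rw [macaulayDown_eq_zero (by omega)] at hdown'
      omega
    have hgrowth : macaulayUp (k + 1) (homogCodim (k + 1) (Y (k + 1))) ≤
        homogCodim (k + 2) (Y (k + 2)) + 1 := by
      rw [macaulayUp_eq_self_add, hdown', macaulayUp_eq_self (by omega), htotal, hstair le_rfl]
      omega
    exact hstep.hasVertexChain_one_right hlow hgrowth (ih k (by omega) hstep hlow hgrowth)
  · exact hY.hasVertexChain_one_of_le (fun _ hi => hstair hi) htotal hp hge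

lemma homogCodim_section_eq_or [Infinite K] [Finite σ] (h : IsGradedStep (m + 1) A B)
    (hl : l ∈ 𝓗 1)
    (hgreen : homogCodim (m + 1) (hyperplaneSection (m + 1) l A) ≤
      macaulayDown (m + 1) (homogCodim (m + 1) A))
    (hgrowth : macaulayUp (m + 1) (homogCodim (m + 1) A) ≤ homogCodim (m + 2) B + 1) :
    homogCodim (m + 1) (hyperplaneSection (m + 1) l A) =
        macaulayDown (m + 1) (homogCodim (m + 1) A) ∨
      homogCodim (m + 1) (hyperplaneSection (m + 1) l A) + 1 =
          macaulayDown (m + 1) (homogCodim (m + 1) A) ∧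
        macaulayUp (m + 1) (homogCodim (m + 1) (hyperplaneSection (m + 1) l A)) ≤
          homogCodim (m + 2) (hyperplaneSection (m + 2) l B) := by
  have hsection := h.macaulayUp_macaulayDown_le_section_add hl hgrowth
  have hmacaulay : homogCodim (m + 2) (hyperplaneSection (m + 2) l B) ≤ _ :=
    (h.restrict hl).homogCodim_right_le
  refine hgreen.eq_or_lt.imp_right fun hlt => ?_
  have hup := macaulayUp_strictMono m hlt
  refine ⟨Nat.le_antisymm hlt ?_, by omega⟩
  by_contra! hlt'
  have hup₁ := macaulayUp_strictMono m hlt'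
  have hup₂ := macaulayUp_strictMono m
    (Nat.lt_add_one (homogCodim (m + 1) (hyperplaneSection (m + 1) l A)))
  omega

variable [IsAlgClosed K] [Finite σ]

lemma hasVertexChain_one_of_almostMaximalGrowth (h : IsGradedStep (m + 1) A B)
    (hA : m + 2 ≤ homogCodim (m + 1) A)
    (hgrowth : macaulayUp (m + 1) (homogCodim (m + 1) A) ≤ homogCodim (m + 2) B + 1) :
    HasVertexChain A 1 := by
  have := IsAlgClosed.instInfinite (K := K)
  induction m using Nat.strong_induction_on generalizing A B with | _ m ihm =>
  induction hc : homogCodim (m + 1) A using Nat.strong_induction_on generalizing A B with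
  | _ c ihc =>
  subst hc
  obtain ⟨l, hl, hgreen, hdrop⟩ := exists_hyperplaneSection h.le_left
  have hstep := h.restrict hl
  have hsection := h.macaulayUp_macaulayDown_le_section_add hl hgrowth
  have hup := macaulayUp_eq_self_add m (homogCodim (m + 1) A)
  have hdown : 0 < macaulayDown (m + 1) (homogCodim (m + 1) A) :=
    (Nat.choose_pos le_rfl).trans_le (choose_le_macaulayDown
      ((Nat.choose_succ_self_right _).trans_le hA))
  have hself := le_macaulayUp m (macaulayDown (m + 1) (homogCodim (m + 1) A))
  by_cases hmax : macaulayUp (m + 1) (homogCodim (m + 1) (hyperplaneSection (m + 1) l A)) ≤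
      homogCodim (m + 2) (hyperplaneSection (m + 2) l B)
  · rcases Nat.eq_zero_or_pos (homogCodim (m + 1) (hyperplaneSection (m + 1) l A)) with hz | hpos
    · obtain ⟨a, ha, hzero, -⟩ :=
        h.exists_common_zero_of_section_eq_zero hl hz (by omega) (by omega)
      exact .of_eval_eq_zero h.le_left ha hzero
    · exact (hdrop 0 (hstep.hasVertexChain_one_of_maximalGrowth hpos hmax)).anti one_le_two
  · have heq := (h.homogCodim_section_eq_or hl hgreen hgrowth).resolve_right fun hdef => hmax hdef.2
    rcases Nat.lt_or_ge (m + 1) (macaulayDown (m + 1) (homogCodim (m + 1) A)) with hlt | hle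
    · exact (hdrop 0 (ihc _ (hgreen.trans_lt (macaulayDown_lt_self (by omega))) hstep
        (by omega) (by rwa [heq]) rfl)).anti one_le_two
    · refine h.hasVertexChain_one_of_critical hl
        (h.homogColon_eq_of_section_add_le hl ?_) heq rfl hdown hle fun k hk => ihm k hk
      rw [heq] at hmax
      rw [macaulayUp_eq_self hle] at hmax hup
      change homogCodim (m + 2) (hyperplaneSection (m + 2) l B) + _ ≤ homogCodim (m + 2) B
      omega

theorem hasVertexChain_of_almostMaximalGrowth (h : IsGradedStep (m + 1) A B)
    (hA : (m + 1 + (d + 1)).choose (m + 1) ≤ homogCodim (m + 1) A)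
    (hgrowth : macaulayUp (m + 1) (homogCodim (m + 1) A) ≤ homogCodim (m + 2) B + 1) :
    HasVertexChain A (d + 1) := by
  have := IsAlgClosed.instInfinite (K := K)
  induction d generalizing A B with
  | zero =>
    exact h.hasVertexChain_one_of_almostMaximalGrowth
      (by rwa [zero_add, Nat.choose_succ_self_right] at hA) hgrowth
  | succ d ih =>
    obtain ⟨l, hl, hgreen, hdrop⟩ := exists_hyperplaneSection h.le_left
    have hstep := h.restrict hl
    have hdown := choose_le_macaulayDown hA
    refine hdrop d ?_
    rcases h.homogCodim_section_eq_or hl hgreen hgrowth with heq | ⟨hdeficient, hmax⟩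
    · refine ih hstep (heq ▸ hdown) ?_
      rw [heq]
      exact h.macaulayUp_macaulayDown_le_section_add hl hgrowth
    · refine hstep.hasVertexChain_of_maximalGrowth ?_ hmax
      have hpascal := Nat.choose_succ_succ' (m + 1 + d) m
      have hpos := Nat.choose_pos (show m ≤ m + 1 + d by omega)
      change (m + 1 + d + 1).choose (m + 1) ≤ _ at hdown
      omega

end IsGradedStep

lemma ringKrullDim_le_of_finite {R S : Type*} [CommRing R] [CommRing S] [Algebra R S]
    [Module.Finite R S] : ringKrullDim S ≤ ringKrullDim R :=
  Order.krullDim_le_of_strictMono (PrimeSpectrum.comap (algebraMap R S)) fun p q h =>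
    Ideal.IsIntegral.comap_lt_comap (I := p.asIdeal) (J := q.asIdeal) h

lemma homogeneousSubmodule_le_sup_mul {m n : ℕ} {I : Ideal 𝒮} {V : Submodule K 𝒮}
    (h : 𝓗 (m + 1) ≤ I.restrictScalars K ⊔ V * 𝓗 m) (hmn : m ≤ n) :
    𝓗 (n + 1) ≤ I.restrictScalars K ⊔ V * 𝓗 n := by
  induction n, hmn using Nat.le_induction with
  | base => exact h
  | succ n _ ih =>
    have hI : 𝓗 1 * I.restrictScalars K ≤ I.restrictScalars K :=
      Submodule.mul_le.2 fun g _ f hf => I.mul_mem_left g hf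
    calc 𝓗 (n + 1 + 1) = 𝓗 1 * 𝓗 (n + 1) := (homogeneousSubmodule_one_mul _).symm
      _ ≤ 𝓗 1 * (I.restrictScalars K ⊔ V * 𝓗 n) := mul_le_mul_right ih _
      _ = 𝓗 1 * I.restrictScalars K ⊔ V * 𝓗 (n + 1) := by
        rw [Submodule.mul_sup, mul_left_comm, homogeneousSubmodule_one_mul]
      _ ≤ I.restrictScalars K ⊔ V * 𝓗 (n + 1) := sup_le_sup_right hI _

lemma eq_top_of_homogeneousSubmodule_le {m : ℕ} {I : Ideal 𝒮} {V N : Submodule K 𝒮}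
    (h : 𝓗 (m + 1) ≤ I.restrictScalars K ⊔ V * 𝓗 m) (hI : I.restrictScalars K ≤ N)
    (hV : V * N ≤ N) (hlow : ∀ n ≤ m, 𝓗 n ≤ N) : N = ⊤ := by
  have hall : ∀ n, 𝓗 n ≤ N := fun n => by
    rcases le_total n m with hnm | hmn
    · exact hlow n hnm
    · induction n, hmn using Nat.le_induction with
      | base => exact hlow m le_rfl
      | succ n hmn ih =>
        exact (homogeneousSubmodule_le_sup_mul h hmn).trans
          (sup_le hI ((mul_le_mul_right ih V).trans hV))
  refine eq_top_iff.2 fun f _ => ?_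
  rw [← sum_homogeneousComponent f]
  exact Submodule.sum_mem _ fun n _ => hall n (homogeneousComponent_isHomogeneous n f)

lemma finite_of_le_sup_mul [Finite σ] {R Q : Type*} [CommRing R] [CommRing Q] [Algebra K R]
    [Algebra K Q] [Algebra R Q] [IsScalarTower K R Q] {m : ℕ} {V : Submodule K 𝒮} (π : 𝒮 →ₐ[K] Q)
    (hπ : Function.Surjective π) (hV : ∀ v ∈ V, π v ∈ (algebraMap R Q).range)
    (h : 𝓗 (m + 1) ≤ (RingHom.ker π).restrictScalars K ⊔ V * 𝓗 m) : Module.Finite R Q := by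
  obtain ⟨S, hS⟩ : (⨆ n ∈ Finset.range (m + 1), 𝓗 n).FG :=
    Submodule.fg_biSup _ _ fun n _ => homogeneousSubmodule_fg σ K n
  let M := Submodule.span R (π '' S)
  have htop : (M.restrictScalars K).comap π.toLinearMap = ⊤ := by
    refine eq_top_of_homogeneousSubmodule_le h (fun f hf => ?_)
      (Submodule.mul_le.2 fun v hv f hf => ?_) fun n hn => ?_
    · have hzero : π f = 0 := hf
      exact (hzero ▸ M.zero_mem : π f ∈ M)
    · obtain ⟨r, hr⟩ := hV v hv
      have hmem : r • π f ∈ M := M.smul_mem r hf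
      rw [Algebra.smul_def, hr, ← map_mul] at hmem
      exact hmem
    · calc 𝓗 n ≤ ⨆ n ∈ Finset.range (m + 1), 𝓗 n :=
          le_iSup₂_of_le n (Finset.mem_range.2 (Nat.lt_succ_of_le hn)) le_rfl
        _ = Submodule.span K (S : Set 𝒮) := hS.symm
        _ ≤ (M.restrictScalars K).comap π.toLinearMap :=
          Submodule.span_le.2 fun f hf => Submodule.subset_span (Set.mem_image_of_mem π hf)
  refine ⟨(eq_top_iff.2 fun q _ => ?_ : M = ⊤) ▸ Submodule.fg_span (S.finite_toSet.image _)⟩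
  obtain ⟨f, rfl⟩ := hπ q
  exact (htop ▸ Submodule.mem_top : f ∈ (M.restrictScalars K).comap π.toLinearMap)

lemma ringKrullDim_le_of_le_sup_span_mul [Finite σ] {Q : Type*} [CommRing Q] [Algebra K Q]
    {m k : ℕ} (π : 𝒮 →ₐ[K] Q) (hπ : Function.Surjective π) (l : Fin k → 𝒮)
    (h : 𝓗 (m + 1) ≤ (RingHom.ker π).restrictScalars K ⊔ Submodule.span K (Set.range l) * 𝓗 m) :
    ringKrullDim Q ≤ k := by
  let φ : MvPolynomial (Fin k) K →ₐ[K] Q := aeval fun i => π (l i)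
  let _ : Algebra (MvPolynomial (Fin k) K) Q := φ.toRingHom.toAlgebra
  have : IsScalarTower K (MvPolynomial (Fin k) K) Q :=
    IsScalarTower.of_algebraMap_eq' φ.comp_algebraMap.symm
  have hspan : Submodule.span K (Set.range l) ≤ φ.range.toSubmodule.comap π.toLinearMap := by
    rw [Submodule.span_le]
    rintro _ ⟨i, rfl⟩
    exact ⟨X i, aeval_X _ i⟩
  have : Module.Finite (MvPolynomial (Fin k) K) Q :=
    finite_of_le_sup_mul π hπ (fun v hv => hspan hv) h
  refine (ringKrullDim_le_of_finite (R := MvPolynomial (Fin k) K)).trans_eq ?_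
  rw [MvPolynomial.ringKrullDim_of_isNoetherianRing, ringKrullDim_eq_zero_of_field, zero_add,
    Nat.card_fin]

lemma hyperplaneSection_sup_span_mul {m d : ℕ} (W : Submodule K 𝒮) (l : 𝒮) (u : Fin d → 𝒮) :
    hyperplaneSection (m + 1) l W ⊔ Submodule.span K (Set.range u) * 𝓗 m =
      W ⊔ Submodule.span K (Set.range (Fin.cons l u : Fin (d + 1) → 𝒮)) * 𝓗 m := by
  rw [Fin.range_cons, Submodule.span_insert, Submodule.sup_mul, Submodule.span_singleton_mul,
    ← sup_assoc]
  rfl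

section KrullDimensionBound

variable [Infinite K] [Finite σ] {m d : ℕ} {W : Submodule K (MvPolynomial σ K)}

lemma exists_le_sup_span_mul (hW : W ≤ 𝓗 (m + 1))
    (h : homogCodim (m + 1) W < (m + 1 + d).choose (m + 1)) :
    ∃ l : Fin d → 𝒮, 𝓗 (m + 1) ≤ W ⊔ Submodule.span K (Set.range l) * 𝓗 m := by
  induction d generalizing W with
  | zero =>
    rw [add_zero, Nat.choose_self, Nat.lt_one_iff] at h
    exact ⟨Fin.elim0, (eq_homogeneousSubmodule_of_homogCodim_eq_zero hW h).ge.trans le_sup_left⟩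
  | succ d ih =>
    obtain ⟨l, hl, hgreen, -⟩ := exists_hyperplaneSection hW
    obtain ⟨u, hu⟩ := ih (hyperplaneSection_le hl hW)
      (hgreen.trans_lt (macaulayDown_lt_choose (by omega) h))
    exact ⟨Fin.cons l u, hyperplaneSection_sup_span_mul W l u ▸ hu⟩

lemma ringKrullDim_quotient_span_le_of_section {l : 𝒮} (hW : W ≤ 𝓗 (m + 1)) (hl : l ∈ 𝓗 1)
    (h : homogCodim (m + 1) (hyperplaneSection (m + 1) l W) < (m + 1 + d).choose (m + 1)) :
    ringKrullDim (𝒮 ⧸ Ideal.span (W : Set 𝒮)) ≤ (d + 1 : ℕ) := by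
  obtain ⟨u, hu⟩ := exists_le_sup_span_mul (hyperplaneSection_le hl hW) h
  rw [hyperplaneSection_sup_span_mul] at hu
  refine ringKrullDim_le_of_le_sup_span_mul (Ideal.Quotient.mkₐ K _)
    (Ideal.Quotient.mkₐ_surjective K _) (Fin.cons l u)
    (hu.trans (sup_le_sup_right (fun f hf => ?_) _))
  exact Ideal.Quotient.eq_zero_iff_mem.2 (Ideal.subset_span hf)

end KrullDimensionBound

section HVector

/-- The component `[I]_n` of degree `n` of an ideal `I`. -/
noncomputable def gradedPart (I : Ideal 𝒮) (n : ℕ) : Submodule K 𝒮 :=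
  I.restrictScalars K ⊓ 𝓗 n

lemma compIdeal_eq_span (I : Ideal 𝒮) (n : ℕ) :
    compIdeal I n = Ideal.span (gradedPart I n : Set 𝒮) :=
  rfl

lemma isGradedStep_gradedPart (I : Ideal 𝒮) (n : ℕ) :
    IsGradedStep n (gradedPart I n) (gradedPart I (n + 1)) where
  le_left := inf_le_right
  le_right := inf_le_right
  mul_le := Submodule.mul_le.2 fun _ hg _ hf =>
    ⟨I.mul_mem_left _ hf.1, homogeneousSubmodule_one_mul (K := K) n ▸ Submodule.mul_mem_mul hg hf.2⟩

lemma homogColon_gradedPart {I : Ideal 𝒮} {l : 𝒮} (hl : l ∈ 𝓗 1)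
    (hreg : IsSMulRegular (𝒮 ⧸ I) l) (n : ℕ) :
    homogColon n l (gradedPart I (n + 1)) = gradedPart I n := by
  refine le_antisymm (fun f hf => ⟨?_, hf.1⟩) ((isGradedStep_gradedPart I n).le_homogColon hl)
  exact isSMulRegular_quotient_iff_mem_of_smul_mem I l |>.1 hreg f hf.2.1

variable [Finite σ]

lemma hilb_eq_homogCodim (I : Ideal 𝒮) (n : ℕ) : hilb I n = homogCodim n (gradedPart I n) := by
  have hrank := finrank_map_add_finrank_inf_ker (Ideal.Quotient.mkₐ K I).toLinearMap (𝓗 n)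
  have hker : 𝓗 n ⊓ LinearMap.ker (Ideal.Quotient.mkₐ K I).toLinearMap = gradedPart I n := by
    ext f
    exact (and_congr_right fun _ => Ideal.Quotient.eq_zero_iff_mem).trans and_comm
  rw [hker] at hrank
  exact Nat.eq_sub_of_add_eq hrank

lemma hvec_eq_homogCodim_hyperplaneSection {I : Ideal 𝒮} {l : 𝒮} (hl : l ∈ 𝓗 1)
    (hreg : IsSMulRegular (𝒮 ⧸ I) l) (n : ℕ) :
    hvec I n = homogCodim n (hyperplaneSection n l (gradedPart I n)) := by
  cases n with
  | zero => exact hilb_eq_homogCodim I 0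
  | succ n =>
    have h := homogCodim_eq_sup_add_colon hl (isGradedStep_gradedPart I n).le_right
    rw [homogColon_gradedPart hl hreg, ← hilb_eq_homogCodim, ← hilb_eq_homogCodim] at h
    exact Nat.sub_eq_of_eq_add h

end HVector

lemma HoldsGenerically.homogCodim_hyperplaneSection_eq_hvec [Finite σ] {I : Ideal 𝒮} {l : 𝒮}
    (hl : l ∈ 𝓗 1) (hreg : IsSMulRegular (𝒮 ⧸ I) l) (n : ℕ) :
    HoldsGenerically fun v : σ → K =>
      homogCodim (n + 1) (hyperplaneSection (n + 1) (linForm v) (gradedPart I (n + 1))) =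
        hvec I (n + 1) := by
  rw [← range_linForm] at hl
  obtain ⟨v₀, rfl⟩ := hl
  have hstep := isGradedStep_gradedPart I n
  refine (homogCodim_sup_le hstep.le_right (v₀ := v₀) (hvec_eq_homogCodim_hyperplaneSection
    (linForm_mem v₀) hreg (n + 1)).ge).mono fun v hv => le_antisymm hv ?_
  change hilb I (n + 1) - hilb I n ≤ _
  rw [hilb_eq_homogCodim, hilb_eq_homogCodim, Nat.sub_le_iff_le_add]
  exact hstep.homogCodim_le_section_add (linForm_mem v)

lemma le_ringKrullDim_quotient_compIdeal [IsAlgClosed K] [Finite σ] {I : Ideal 𝒮} {l : 𝒮}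
    (hl : l ∈ 𝓗 1) (hreg : IsSMulRegular (𝒮 ⧸ I) l) {m d : ℕ}
    (hlow : (m + 1 + (d + 1)).choose (m + 1) ≤ hvec I (m + 1))
    (hgrowth : macaulayUp (m + 1) (hvec I (m + 1)) ≤ hvec I (m + 2) + 1) :
    (d + 2 : ℕ) ≤ ringKrullDim (𝒮 ⧸ compIdeal I (m + 1)) := by
  have hstep := isGradedStep_gradedPart I (m + 1)
  obtain ⟨v, ⟨hA, hB⟩, hdrop⟩ :=
    (((HoldsGenerically.homogCodim_hyperplaneSection_eq_hvec hl hreg m).and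
      (.homogCodim_hyperplaneSection_eq_hvec hl hreg (m + 1))).and
        (HasVertexChain.drop (gradedPart I (m + 1)) m)).exists_of_infinite
  rw [← hA] at hlow
  rw [← hA, ← hB] at hgrowth
  have hchain := (hstep.restrict (linForm_mem v)).hasVertexChain_of_almostMaximalGrowth hlow hgrowth
  rw [compIdeal_eq_span]
  exact (hdrop d hchain).natCast_le_ringKrullDim

lemma ringKrullDim_quotient_compIdeal_le [Infinite K] [Finite σ] {I : Ideal 𝒮} {l : 𝒮}
    (hl : l ∈ 𝓗 1) (hreg : IsSMulRegular (𝒮 ⧸ I) l) {m d : ℕ}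
    (h : hvec I (m + 1) < (m + 1 + d).choose (m + 1)) :
    ringKrullDim (𝒮 ⧸ compIdeal I (m + 1)) ≤ (d + 1 : ℕ) := by
  rw [compIdeal_eq_span]
  exact ringKrullDim_quotient_span_le_of_section (isGradedStep_gradedPart I (m + 1)).le_left hl
    ((hvec_eq_homogCodim_hyperplaneSection hl hreg (m + 1)).symm.trans_lt h)

lemma eq_or_eq_add_one_of_natCast_le {x : WithBot ℕ∞} {k : ℕ} (h₁ : (k : WithBot ℕ∞) ≤ x)
    (h₂ : x ≤ (k + 1 : ℕ)) : x = k ∨ x = (k + 1 : ℕ) := by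
  rcases h₁.eq_or_lt with h | h
  · exact .inl h.symm
  · refine .inr (h₂.antisymm ?_)
    cases x with
    | bot => exact absurd h₁ (WithBot.not_coe_le_bot _)
    | coe x => exact_mod_cast Order.add_one_le_of_lt (WithBot.coe_lt_coe.1 h)

theorem points_almostMaximalGrowth_baseLocus_dim_general [IsAlgClosed K] [Finite σ]
    {I : Ideal 𝒮} {l : 𝒮} (hl : l ∈ 𝓗 1) (hreg : IsSMulRegular (𝒮 ⧸ I) l) {n : ℕ} (hn : 0 < n)
    (hlow : n + 1 ≤ hvec I n) (hamg : macaulayUp n (hvec I n) ≤ hvec I (n + 1) + 1) :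
    ringKrullDim (𝒮 ⧸ compIdeal I n) = (MGdim (hvec I n) n + 1 : ℕ) ∨
      ringKrullDim (𝒮 ⧸ compIdeal I n) = (MGdim (hvec I n) n + 2 : ℕ) := by
  have : Infinite K := IsAlgClosed.instInfinite
  have hMG {d : ℕ} : d ≤ MGdim (hvec I n) n ↔ (n + d).choose n ≤ hvec I n :=
    le_MGdim_iff hn (by omega)
  obtain ⟨e, he⟩ : ∃ e, MGdim (hvec I n) n = e + 1 :=
    Nat.exists_eq_add_of_le' (hMG.2 (by rwa [Nat.choose_succ_self_right]))
  obtain ⟨m, rfl⟩ : ∃ m, n = m + 1 := Nat.exists_eq_add_of_le' hn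
  have hupper : hvec I (m + 1) < (m + 1 + (e + 2)).choose (m + 1) :=
    not_le.1 fun h => absurd (hMG.2 h) (by omega)
  rw [he]
  exact eq_or_eq_add_one_of_natCast_le
    (le_ringKrullDim_quotient_compIdeal hl hreg (hMG.1 he.ge) hamg)
    (ringKrullDim_quotient_compIdeal_le hl hreg hupper)

section Points

variable {r : ℕ} {Z : Set (Fin r → K)}

lemma mem_pointsIdeal_iff_restrictLine [Infinite K] {f : MvPolynomial (Fin r) K} :
    f ∈ pointsIdeal Z ↔ ∀ v ∈ Z, restrictLine v f = 0 := by
  simp only [pointsIdeal, Submodule.mem_iInf, RingHom.mem_ker, ← eval_restrictLine]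
  exact forall₂_congr fun v _ =>
    ⟨fun h => Polynomial.funext fun c => (h c).trans Polynomial.eval_zero.symm,
      fun h c => by rw [h, Polynomial.eval_zero]⟩

lemma isSMulRegular_quotient_pointsIdeal [Infinite K] {l : MvPolynomial (Fin r) K}
    (hl : ∀ v ∈ Z, eval v l ≠ 0) : IsSMulRegular (MvPolynomial (Fin r) K ⧸ pointsIdeal Z) l := by
  rw [isSMulRegular_quotient_iff_mem_of_smul_mem]
  intro f hlf
  rw [mem_pointsIdeal_iff_restrictLine] at hlf ⊢
  intro v hv
  refine (mul_eq_zero.1 ((map_mul _ l f).symm.trans (hlf v hv))).resolve_left fun h => hl v hv ?_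
  rw [← one_smul K v, ← eval_restrictLine, h, Polynomial.eval_zero]

lemma exists_linForm_forall_eval_ne_zero [Infinite K] [Finite σ] (Z : Finset (σ → K))
    (hZ : ∀ v ∈ Z, v ≠ 0) : ∃ a : σ → K, ∀ v ∈ Z, eval v (linForm a) ≠ 0 := by
  classical
  refine (HoldsGenerically.forall_mem_finset Z fun v hv => ?_).exists_of_infinite
  obtain ⟨i, hi⟩ := Function.ne_iff.1 (hZ v hv)
  refine HoldsGenerically.linearMap_ne_zero (φ := (aeval v).toLinearMap ∘ₗ linForm)
    (v₀ := Pi.single i 1) ?_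
  simpa [linForm_single_one] using hi

end Points

end Forms

/-- **Corollary.**  Let `Z ⊂ ℙ^r` be a finite reduced set of points with saturated homogeneous
ideal `I_Z ⊂ R = K[x_0,…,x_r]`, and let `A = S/J` be the artinian reduction of `R/I_Z` by a
general linear form, whose Hilbert function is the `h`-vector `Δh_Z` of `Z`.  Assume that
`h_A(n) ≥ n + 1` and `h_A(n+1) = h_A(n)^{⟨n⟩} - 1` (almost maximal growth, i.e. the hypotheses
of one of the two base-locus theorems hold).  Then the base locus of `[I_Z]_n` in `ℙ^r` is a
scheme of dimension either `MG(h_A(n),n)` or `MG(h_A(n),n) + 1`; equivalently, the Krull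
dimension of `R/⟨[I_Z]_n⟩` is either `MG(h_A(n),n) + 1` or `MG(h_A(n),n) + 2`. -/
theorem points_almostMaximalGrowth_baseLocus_dim
    {K : Type*} [Field K] [IsAlgClosed K] {r : ℕ}
    (Z : Finset (Fin (r + 1) → K))
    (hZ0 : ∀ v ∈ Z, v ≠ (0 : Fin (r + 1) → K))
    (hZdist : ∀ v ∈ Z, ∀ w ∈ Z, v ≠ w → ∀ c : K, w ≠ c • v)
    (n : ℕ)
    (hlow : n + 1 ≤ hvec (pointsIdeal (↑Z : Set (Fin (r + 1) → K))) n)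
    (hamg : hvec (pointsIdeal (↑Z : Set (Fin (r + 1) → K))) (n + 1) + 1
      = macaulayUp n (hvec (pointsIdeal (↑Z : Set (Fin (r + 1) → K))) n)) :
    ringKrullDim
        (MvPolynomial (Fin (r + 1)) K ⧸ compIdeal (pointsIdeal (↑Z : Set (Fin (r + 1) → K))) n)
      = ((MGdim (hvec (pointsIdeal (↑Z : Set (Fin (r + 1) → K))) n) n + 1 : ℕ) : WithBot ℕ∞) ∨
    ringKrullDim
        (MvPolynomial (Fin (r + 1)) K ⧸ compIdeal (pointsIdeal (↑Z : Set (Fin (r + 1) → K))) n)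
      = ((MGdim (hvec (pointsIdeal (↑Z : Set (Fin (r + 1) → K))) n) n + 2 : ℕ) : WithBot ℕ∞) := by
  have : Infinite K := IsAlgClosed.instInfinite
  have hn : 0 < n := Nat.pos_of_ne_zero fun h => by simp [h, macaulayUp] at hamg
  obtain ⟨a, ha⟩ := exists_linForm_forall_eval_ne_zero Z hZ0
  exact points_almostMaximalGrowth_baseLocus_dim_general (linForm_mem a)
    (isSMulRegular_quotient_pointsIdeal ha) hn hlow hamg.ge
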